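/- (Long term stability of actions near a fully resonant torus) There are constants γ₀ > 0 and r₀ ∈ (0,1) with the following property: for every γ ≥ γ₀ there are positive constants ε₀, c₂, c₃ such that if 0 < ε ≤ ε₀, n is a natural number with n < ε^{−d/(2(d+1))}, and I* ∈ B_R satisfies n·h₀'(I*) ∈ ℤ^d, then every trajectory (I_k,φ_k) = F_ε^k(I₀,φ₀) with |I₀ − I*| < r₀ ρ_n and φ₀ ∈ ℝ^d satisfies |I_k − I*| < ρ_n for all integers 0 ≤ k ≤ c₂·exp(c₃ ε^{−1/(2(d+1))}), where ρ_n = γ n^{−1} ε^{1/(2(d+1))}. -/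

import Mathlib

/-- Real phase space `ℝ^d × ℝ^d` (actions–angles, sup norm), a lift of `ℝ^d × 𝕋^d`. -/
abbrev RPhase (d : ℕ) := (Fin d → ℝ) × (Fin d → ℝ)

/-- Complex phase space `ℂ^d × ℂ^d` with the sup norm. -/
abbrev CPhase (d : ℕ) := (Fin d → ℂ) × (Fin d → ℂ)

/-- Complexification of a real vector. -/
def cx (d : ℕ) (v : Fin d → ℝ) : Fin d → ℂ := fun i => (v i : ℂ)

/-!
Scale the actions by `ρ` about the fully resonant torus. A block of `n` iterates of `F`, followed by
an integral translation of the angles, then becomes a map which is `O(n ρ)`-close to the identity,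
and it lifts to a holomorphic map `G` on an extended phase space `(J, φ, α)` which preserves the
contact form `θ = J · dφ - dα`.

Following Gelfreich and Vieiro, interpolate `m + 1` points `v, G v, …, G^m v` of an orbit by a
polynomial curve `W_v` in time and let `X v` be its initial velocity. The difference
`t ↦ G (W_v t) - W_{G v} t` vanishes at `0, …, m - 1`, so by the maximum principle its derivative
at `0`, which is `DG X - X ∘ G`, is `O(exp (-m))`; here `m` can be taken of order `1 / (n ρ)`. As
`G` preserves `θ`, the energy `θ(X)` changes by `O(exp (-m))` per block. Its leading part is `n`
times the quadratic remainder of `h₀`, which is convex, so a conserved energy keeps the actions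
within distance `ρ` of the torus for an exponentially long time.
-/

section

open Metric Set

/-! ### Cauchy estimates -/

section Cauchy

variable {E F : Type*} [NormedAddCommGroup E] [NormedAddCommGroup F] {f : E → F} {x y : E}
  {e M : ℝ}

theorem mapsTo_closedBall_two_mul_of_norm_le (he : 0 < e) (hM : ∀ z ∈ ball x e, ‖f z‖ ≤ M) :
    MapsTo f (ball x e) (closedBall (f x) (2 * M)) := by
  intro z hz
  rw [mem_closedBall, dist_eq_norm]
  linarith [norm_sub_le (f z) (f x), hM z hz, hM x (mem_ball_self he)]

variable [NormedSpace ℂ E] [NormedSpace ℂ F]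

theorem norm_sub_le_of_norm_le_on_ball (hf : DifferentiableOn ℂ f (ball x e))
    (hM : ∀ z ∈ ball x e, ‖f z‖ ≤ M) (hy : y ∈ ball x e) :
    ‖f y - f x‖ ≤ 2 * M / e * ‖y - x‖ := by
  simpa only [dist_eq_norm] using Complex.dist_le_div_mul_dist_of_mapsTo_ball hf
    (mapsTo_closedBall_two_mul_of_norm_le (nonempty_ball.mp ⟨y, hy⟩) hM) hy

theorem norm_fderiv_le_of_norm_le_on_ball (he : 0 < e) (hf : DifferentiableOn ℂ f (ball x e))
    (hM : ∀ z ∈ ball x e, ‖f z‖ ≤ M) : ‖fderiv ℂ f x‖ ≤ 2 * M / e :=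
  Complex.norm_fderiv_le_div_of_mapsTo_ball hf (mapsTo_closedBall_two_mul_of_norm_le he hM) he

theorem norm_sub_sub_fderiv_le_of_norm_le_on_ball (hf : DifferentiableOn ℂ f (ball x e))
    (hM : ∀ z ∈ ball x e, ‖f z‖ ≤ M) {w : E} (hw : ‖w‖ < e) :
    ‖f (x + w) - f x - fderiv ℂ f x w‖ ≤ 4 * M / e ^ 2 * ‖w‖ ^ 2 := by
  have he : 0 < e := (norm_nonneg w).trans_lt hw
  set g : E → F := fun z ↦ f z - fderiv ℂ f x z with hg_def
  have hg_sub : ∀ z, g z - g x = f z - f x - fderiv ℂ f x (z - x) := fun z ↦ by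
    simp only [hg_def, map_sub]
    abel
  have hg : DifferentiableOn ℂ g (ball x e) := hf.sub (fderiv ℂ f x).differentiableOn
  have hg_little : (g · - g x) =o[nhds x] fun z ↦ ‖z - x‖ ^ 1 := by
    simp only [hg_sub, pow_one]
    exact (hf.differentiableAt (ball_mem_nhds x he)).hasFDerivAt.isLittleO.norm_right
  have hg_maps : MapsTo g (ball x e) (closedBall (g x) (4 * M)) := by
    intro z hz
    have hzx : ‖z - x‖ ≤ e := (mem_ball_iff_norm.1 hz).le
    have hlin : ‖fderiv ℂ f x (z - x)‖ ≤ 2 * M := by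
      refine ((fderiv ℂ f x).le_of_opNorm_le_of_le
        (norm_fderiv_le_of_norm_le_on_ball he hf hM) hzx).trans_eq ?_
      field_simp
    rw [mem_closedBall, dist_eq_norm, hg_sub]
    linarith [norm_sub_le (f z - f x) (fderiv ℂ f x (z - x)), norm_sub_le (f z) (f x), hM z hz,
      hM x (mem_ball_self he)]
  have hmain := Complex.dist_le_mul_div_pow_of_mapsTo_ball_of_isLittleO hg hg_maps hg_little
    (z := x + w) (by simpa using hw)
  rw [dist_eq_norm, hg_sub, add_sub_cancel_left, dist_eq_norm, add_sub_cancel_left] at hmain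
  exact hmain.trans_eq (by ring)

end Cauchy

/-! ### Generalized binomial coefficients -/

theorem ring_choose_eq_prod_div (t : ℂ) (k : ℕ) :
    Ring.choose t k = (∏ j ∈ Finset.range k, (t - j)) / k.factorial := by
  rw [Ring.choose_eq_smul, ← Polynomial.aeval_eq_smeval, Polynomial.aeval_def,
    ← Polynomial.eval_map, descPochhammer_map, descPochhammer_eval_eq_prod_range, smul_eq_mul,
    div_eq_inv_mul]

theorem differentiable_ring_choose (k : ℕ) : Differentiable ℂ fun t : ℂ ↦ Ring.choose t k := by
  simp only [ring_choose_eq_prod_div]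
  fun_prop

theorem norm_ring_choose_le {t : ℂ} {k : ℕ} {R : ℝ} (h : ‖t‖ + k ≤ R) :
    ‖Ring.choose t k‖ ≤ R ^ k / k.factorial := by
  rw [ring_choose_eq_prod_div, norm_div, norm_prod, Complex.norm_natCast]
  gcongr
  calc ∏ j ∈ Finset.range k, ‖t - j‖ ≤ ∏ _j ∈ Finset.range k, R := by
        refine Finset.prod_le_prod (fun _ _ ↦ norm_nonneg _) fun j hj ↦ ?_
        have hjk : (j : ℝ) ≤ k := mod_cast (Finset.mem_range.mp hj).le
        have := norm_sub_le t j
        rw [Complex.norm_natCast] at this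
        linarith
    _ = R ^ k := by simp

theorem deriv_ring_choose_succ_zero (k : ℕ) :
    deriv (fun t : ℂ ↦ Ring.choose t (k + 1)) 0 = (-1) ^ k / (k + 1) := by
  have hprod : (fun t : ℂ ↦ Ring.choose t (k + 1)) =
      fun t : ℂ ↦ (∏ j ∈ Finset.range k, (t - (j + 1))) / (k + 1).factorial * t := by
    funext t
    rw [ring_choose_eq_prod_div, Finset.prod_range_succ']
    push_cast
    ring
  have hdiff : DifferentiableAt ℂ
      (fun t : ℂ ↦ (∏ j ∈ Finset.range k, (t - (j + 1))) / (k + 1).factorial) 0 := by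
    fun_prop
  have hval : ∏ j ∈ Finset.range k, ((0 : ℂ) - (j + 1)) = (-1) ^ k * k.factorial := by
    simp only [zero_sub, ← neg_one_mul ((_ : ℂ) + 1), Finset.prod_mul_distrib,
      Finset.prod_const, Finset.card_range, ← Finset.prod_range_add_one_eq_factorial]
    push_cast
    rfl
  rw [hprod, deriv_fun_mul hdiff differentiableAt_fun_id, hval, Nat.factorial_succ]
  have : (k.factorial : ℂ) ≠ 0 := mod_cast k.factorial_ne_zero
  push_cast
  simp only [deriv_id'']
  field_simp
  ring

theorem norm_deriv_ring_choose_succ_zero_le (k : ℕ) :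
    ‖deriv (fun t : ℂ ↦ Ring.choose t (k + 1)) 0‖ ≤ 1 := by
  have hk : ‖(k + 1 : ℂ)‖ = k + 1 := mod_cast Complex.norm_natCast (k + 1)
  rw [deriv_ring_choose_succ_zero, norm_div, norm_pow, norm_neg, norm_one, one_pow, hk]
  exact div_le_one_of_le₀ (by linarith [k.cast_nonneg (α := ℝ)]) (by positivity)

/-! ### Holomorphic functions with many integer zeros -/

section IntegerZeros

variable {V : Type*} [NormedAddCommGroup V] [NormedSpace ℂ V] [CompleteSpace V] {u : ℂ → V}

theorem exists_eq_prod_sub_natCast_smul {U : Set ℂ} (hU : IsOpen U)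
    (hu : DifferentiableOn ℂ u U) (N : ℕ) (hz : ∀ j : ℕ, j < N → (j : ℂ) ∈ U ∧ u j = 0) :
    ∃ w : ℂ → V, DifferentiableOn ℂ w U ∧
      ∀ t, u t = (∏ j ∈ Finset.range N, (t - (j : ℂ))) • w t := by
  induction N with
  | zero => exact ⟨u, hu, by simp⟩
  | succ N ih =>
    obtain ⟨w, hw, huw⟩ := ih fun j hj ↦ hz j (by omega)
    obtain ⟨hNU, huN⟩ := hz N (by omega)
    have hprod : ∏ j ∈ Finset.range N, ((N : ℂ) - j) ≠ 0 :=
      Finset.prod_ne_zero_iff.mpr fun j hj ↦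
        sub_ne_zero.mpr (mod_cast (Finset.mem_range.mp hj).ne')
    have hwN : w N = 0 := by simpa [huN, hprod] using (huw N).symm
    refine ⟨dslope w N, (Complex.differentiableOn_dslope (hU.mem_nhds hNU)).2 hw, fun t ↦ ?_⟩
    rw [huw t, Finset.prod_range_succ, mul_smul, sub_smul_dslope, hwN, sub_zero]

theorem norm_prod_sub_natCast_ge {m : ℕ} {t : ℂ} (ht : ‖t‖ = 7 * m) :
    (6 * m : ℝ) ^ m ≤ ‖∏ j ∈ Finset.range m, (t - (j : ℂ))‖ := by
  rw [norm_prod]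
  calc (6 * m : ℝ) ^ m = ∏ _j ∈ Finset.range m, (6 * m : ℝ) := by simp
    _ ≤ ∏ j ∈ Finset.range m, ‖t - (j : ℂ)‖ := by
      refine Finset.prod_le_prod (fun _ _ ↦ by positivity) fun j hj ↦ ?_
      have hjm : (j : ℝ) ≤ m := mod_cast (Finset.mem_range.mp hj).le
      have := norm_sub_norm_le t (j : ℂ)
      rw [ht, Complex.norm_natCast] at this
      linarith

theorem norm_prod_sub_natCast_le {m : ℕ} {t : ℂ} (ht : ‖t‖ ≤ m) :
    ‖∏ j ∈ Finset.range m, (t - (j : ℂ))‖ ≤ (2 * m : ℝ) ^ m := by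
  rw [norm_prod]
  calc ∏ j ∈ Finset.range m, ‖t - (j : ℂ)‖ ≤ ∏ _j ∈ Finset.range m, (2 * m : ℝ) := by
        refine Finset.prod_le_prod (fun _ _ ↦ norm_nonneg _) fun j hj ↦ ?_
        have hjm : (j : ℝ) ≤ m := mod_cast (Finset.mem_range.mp hj).le
        have := norm_sub_le t (j : ℂ)
        rw [Complex.norm_natCast] at this
        linarith
    _ = (2 * m : ℝ) ^ m := by simp

-- The quotient by `t (t - 1) ⋯ (t - m + 1)` is bounded on `|t| = 7m` by `M (6m)^{-m}`, hence
-- inside; multiplying back on `|t| ≤ m` gains the factor `(2m)^m (6m)^{-m} = 3^{-m}`.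
theorem norm_le_mul_exp_neg_of_integer_zeros {m : ℕ} (hm : 1 ≤ m) {M : ℝ}
    (hu : DifferentiableOn ℂ u (ball 0 (8 * m))) (hM : ∀ t ∈ ball (0 : ℂ) (8 * m), ‖u t‖ ≤ M)
    (hz : ∀ j : ℕ, j < m → u j = 0) {t : ℂ} (ht : ‖t‖ ≤ m) : ‖u t‖ ≤ M * Real.exp (-m) := by
  have hm0 : (1 : ℝ) ≤ m := mod_cast hm
  have hM0 : 0 ≤ M := (norm_nonneg _).trans (hM 0 (mem_ball_self (by linarith)))
  obtain ⟨w, hw, huw⟩ := exists_eq_prod_sub_natCast_smul isOpen_ball hu m fun j hj ↦ ⟨by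
    have : (j : ℝ) < m := mod_cast hj
    rw [mem_ball_zero_iff, Complex.norm_natCast]
    linarith, hz j hj⟩
  have hcl : closedBall (0 : ℂ) (7 * m) ⊆ ball 0 (8 * m) := closedBall_subset_ball (by linarith)
  have hw_le : ∀ z ∈ closedBall (0 : ℂ) (7 * m), ‖w z‖ ≤ M / (6 * m) ^ m := by
    intro z hz
    rw [← closure_ball (0 : ℂ) (by positivity : (7 * m : ℝ) ≠ 0)] at hz
    refine Complex.norm_le_of_forall_mem_frontier_norm_le isBounded_ball
      (hw.diffContOnCl_ball hcl) (fun y hy ↦ ?_) hz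
    rw [frontier_ball _ (by positivity)] at hy
    have hy_le := hM y (hcl (sphere_subset_closedBall hy))
    rw [huw y, norm_smul] at hy_le
    rw [le_div_iff₀ (by positivity), mul_comm]
    exact (mul_le_mul_of_nonneg_right (norm_prod_sub_natCast_ge (by simpa using hy))
      (norm_nonneg _)).trans hy_le
  have hexp : (1 / 3 : ℝ) ^ m ≤ Real.exp (-m) := by
    rw [show -(m : ℝ) = m * (-1) by ring, Real.exp_nat_mul, Real.exp_neg, one_div]
    gcongr
    linarith [Real.exp_one_lt_d9]
  calc ‖u t‖ = ‖∏ j ∈ Finset.range m, (t - (j : ℂ))‖ * ‖w t‖ := by rw [huw t, norm_smul]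
    _ ≤ (2 * m : ℝ) ^ m * (M / (6 * m) ^ m) := by
      gcongr
      · exact norm_prod_sub_natCast_le ht
      · exact hw_le t (mem_closedBall_zero_iff.mpr (by linarith))
    _ = M * (1 / 3) ^ m := by
      rw [show (6 * m : ℝ) = 3 * (2 * m) by ring, mul_pow 3, one_div, inv_pow]
      field_simp
    _ ≤ M * Real.exp (-m) := by gcongr

theorem norm_deriv_zero_le_of_integer_zeros {m : ℕ} (hm : 1 ≤ m) {M : ℝ}
    (hu : DifferentiableOn ℂ u (ball 0 (8 * m))) (hM : ∀ t ∈ ball (0 : ℂ) (8 * m), ‖u t‖ ≤ M)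
    (hz : ∀ j : ℕ, j < m → u j = 0) : ‖deriv u 0‖ ≤ M * Real.exp (-m) := by
  have hm0 : (1 : ℝ) ≤ m := mod_cast hm
  have := Complex.norm_deriv_le_of_forall_mem_sphere_norm_le one_pos
    (hu.diffContOnCl_ball (closedBall_subset_ball (by linarith : (1 : ℝ) < 8 * m)))
    fun t ht ↦ norm_le_mul_exp_neg_of_integer_zeros hm hu hM hz
      ((mem_sphere_zero_iff_norm.mp ht).trans_le hm0)
  simpa using this

end IntegerZeros

/-! ### Newton interpolation of an orbit -/

section Interpolation

/-- The differences `∑ⱼ (-1)^(k-j) (k choose j) G^j x` of order `k` along the orbit of `x`. -/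
def iterDiff {V : Type*} [AddCommGroup V] (G : V → V) : ℕ → V → V
  | 0, x => x
  | k + 1, x => iterDiff G k (G x) - iterDiff G k x

theorem fwdDiff_iter_orbit_eq_iterDiff {V : Type*} [AddCommGroup V] (G : V → V) (v : V)
    (k i : ℕ) : (fwdDiff 1)^[k] (fun j : ℕ ↦ G^[j] v) i = iterDiff G k (G^[i] v) := by
  induction k generalizing i with
  | zero => rfl
  | succ k ih =>
    rw [Function.iterate_succ_apply', fwdDiff, ih, ih, iterDiff, ← Function.iterate_succ_apply' G]

variable {V : Type*} [NormedAddCommGroup V] [NormedSpace ℂ V]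

/-- The polynomial curve of degree `m` through the orbit `v, G v, …, G^m v` at the times
`0, 1, …, m`, in Newton's form. -/
noncomputable def newtonInterp (G : V → V) (m : ℕ) (v : V) (t : ℂ) : V :=
  ∑ k ∈ Finset.range (m + 1), Ring.choose t k • iterDiff G k v

/-- The interpolating vector field: the initial velocity of the Newton interpolation of the
orbit. -/
noncomputable def interpField (G : V → V) (m : ℕ) (v : V) : V :=
  deriv (newtonInterp G m v) 0

theorem newtonInterp_natCast (G : V → V) {m : ℕ} (v : V) {j : ℕ} (hj : j ≤ m) :
    newtonInterp G m v j = G^[j] v := by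
  have hshift := shift_eq_sum_fwdDiff_iter 1 (fun j : ℕ ↦ G^[j] v) j 0
  simp only [smul_eq_mul, mul_one, zero_add, fwdDiff_iter_orbit_eq_iterDiff,
    Function.iterate_zero, id] at hshift
  simp only [newtonInterp, hshift, Ring.choose_natCast, Nat.cast_smul_eq_nsmul]
  refine (Finset.sum_subset (Finset.range_mono (by omega)) fun k _ hk ↦ ?_).symm
  rw [Nat.choose_eq_zero_of_lt (by simpa using hk), zero_smul]

theorem differentiable_newtonInterp (G : V → V) (m : ℕ) (v : V) :
    Differentiable ℂ (newtonInterp G m v) := by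
  have := differentiable_ring_choose
  unfold newtonInterp
  fun_prop

theorem interpField_eq_sum (G : V → V) (m : ℕ) (v : V) :
    interpField G m v =
      ∑ k ∈ Finset.range (m + 1), deriv (fun t : ℂ ↦ Ring.choose t k) 0 • iterDiff G k v := by
  unfold interpField newtonInterp
  rw [deriv_fun_sum fun k _ ↦ (differentiable_ring_choose k 0).smul_const _]
  exact Finset.sum_congr rfl fun k _ ↦ deriv_smul_const (differentiable_ring_choose k 0) _

variable {G : V → V} {v : V} {r δ : ℝ}

theorem iterDiff_succ_bound {η : ℝ} (hδ : 0 ≤ δ) (hδη : δ < η)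
    (hG : DifferentiableOn ℂ G (ball v r)) (hGδ : ∀ x ∈ ball v r, ‖G x - x‖ ≤ δ) (k : ℕ) :
    DifferentiableOn ℂ (iterDiff G (k + 1)) (ball v (r - k * η)) ∧
      ∀ x ∈ ball v (r - k * η), ‖iterDiff G (k + 1) x‖ ≤ δ * (2 * δ / η) ^ k := by
  induction k with
  | zero => simpa [iterDiff] using ⟨hG.sub differentiableOn_id, fun x ↦ hGδ x⟩
  | succ k ih =>
    obtain ⟨hdiff, hbound⟩ := ih
    have hradius : r - (k + 1 : ℕ) * η = r - k * η - η := by push_cast; ring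
    have hkη : 0 ≤ k * η := by positivity [hδ.trans_lt hδη]
    have hball : ∀ x ∈ ball v (r - k * η - η), ball x η ⊆ ball v (r - k * η) := fun x hx ↦
      ball_subset_ball' (by linarith [mem_ball.mp hx])
    have hsub : ball v (r - k * η - η) ⊆ ball v r := ball_subset_ball (by linarith)
    have hGball : ∀ x ∈ ball v (r - k * η - η), G x ∈ ball x η := fun x hx ↦ by
      rw [mem_ball, dist_eq_norm]
      exact (hGδ x (hsub hx)).trans_lt hδη
    rw [hradius]
    refine ⟨(hdiff.comp (hG.mono hsub) fun x hx ↦ hball x hx (hGball x hx)).sub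
      (hdiff.mono (ball_subset_ball (by linarith))), fun x hx ↦ ?_⟩
    calc ‖iterDiff G (k + 1) (G x) - iterDiff G (k + 1) x‖
        ≤ 2 * (δ * (2 * δ / η) ^ k) / η * ‖G x - x‖ :=
          norm_sub_le_of_norm_le_on_ball (hdiff.mono (hball x hx))
            (fun z hz ↦ hbound z (hball x hx hz)) (hGball x hx)
      _ ≤ 2 * (δ * (2 * δ / η) ^ k) / η * δ := by
          have : 0 < η := by linarith
          gcongr
          exact hGδ x (hsub hx)
      _ = δ * (2 * δ / η) ^ (k + 1) := by ring

theorem norm_iterDiff_succ_le (hδ : 0 ≤ δ) (hG : DifferentiableOn ℂ G (ball v r))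
    (hGδ : ∀ x ∈ ball v r, ‖G x - x‖ ≤ δ) {k : ℕ} (hk : (k + 1) * δ < r) :
    ‖iterDiff G (k + 1) v‖ ≤ δ * (2 * (k + 1) * δ / r) ^ k := by
  have hr : 0 < r := lt_of_le_of_lt (by positivity) hk
  have hδη : δ < r / (k + 1) := by rwa [lt_div_iff₀' (by positivity)]
  have hv : v ∈ ball v (r - k * (r / (k + 1))) := by
    apply mem_ball_self
    have : r - k * (r / (k + 1)) = r / (k + 1) := by field_simp; ring
    rw [this]
    positivity
  convert (iterDiff_succ_bound hδ hδη hG hGδ k).2 v hv using 3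
  field_simp

theorem norm_ring_choose_smul_iterDiff_succ_le (hδ : 0 ≤ δ) (hr : 0 < r)
    (hG : DifferentiableOn ℂ G (ball v r)) (hGδ : ∀ x ∈ ball v r, ‖G x - x‖ ≤ δ)
    {m : ℕ} (hm : 200 * (m * δ) ≤ r) {t : ℂ} (ht : ‖t‖ ≤ 8 * m) {k : ℕ} (hk : k < m) :
    ‖Ring.choose t (k + 1) • iterDiff G (k + 1) v‖ ≤ r / 8 * (1 / 2) ^ k := by
  have hkm : (k + 1 : ℝ) ≤ m := mod_cast hk
  have hkδ : (k + 1) * δ ≤ m * δ := by gcongr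
  have hdiff := norm_iterDiff_succ_le hδ hG hGδ (k := k) (by linarith [mul_nonneg m.cast_nonneg hδ])
  have hchoose : ‖Ring.choose t (k + 1)‖ ≤ (9 * m : ℝ) ^ (k + 1) / (k + 1).factorial :=
    norm_ring_choose_le (by push_cast; linarith)
  have hfact : (k + 1 : ℝ) ^ (k + 1) / (k + 1).factorial ≤ Real.exp 1 ^ (k + 1) := by
    rw [← Real.exp_nat_mul, mul_one, Nat.cast_succ]
    exact Real.pow_div_factorial_le_exp _ (by positivity) _
  have hquarter : Real.exp 1 * (18 * (m * δ) / r) ≤ 1 / 4 := by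
    have hratio : 18 * (m * δ) / r ≤ 18 / 200 := by
      rw [div_le_div_iff₀ hr (by norm_num)]
      linarith
    have hexp : Real.exp 1 ≤ 2.72 := by linarith [Real.exp_one_lt_d9]
    calc Real.exp 1 * (18 * (m * δ) / r) ≤ 2.72 * (18 / 200) := by gcongr
      _ ≤ 1 / 4 := by norm_num
  rw [norm_smul]
  calc ‖Ring.choose t (k + 1)‖ * ‖iterDiff G (k + 1) v‖
      ≤ (9 * m : ℝ) ^ (k + 1) / (k + 1).factorial * (δ * (2 * (k + 1) * δ / r) ^ k) := by gcongr
    _ = r / (2 * (k + 1)) *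
          ((k + 1 : ℝ) ^ (k + 1) / (k + 1).factorial * (18 * (m * δ) / r) ^ (k + 1)) := by
        rw [show (18 : ℝ) = 9 * 2 by norm_num]
        simp only [div_pow, mul_pow]
        field_simp
        ring
    _ ≤ r / (2 * (k + 1)) * (Real.exp 1 ^ (k + 1) * (18 * (m * δ) / r) ^ (k + 1)) := by gcongr
    _ = r / (2 * (k + 1)) * (Real.exp 1 * (18 * (m * δ) / r)) ^ (k + 1) := by rw [mul_pow]
    _ ≤ r / 2 * (1 / 4) ^ (k + 1) := by
        gcongr
        linarith [k.cast_nonneg (α := ℝ)]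
    _ = r / 8 * (1 / 4) ^ k := by ring
    _ ≤ r / 8 * (1 / 2) ^ k := by gcongr; norm_num

theorem sum_range_mul_half_pow_le {c : ℝ} (hc : 0 ≤ c) (m : ℕ) :
    ∑ k ∈ Finset.range m, c * (1 / 2) ^ k ≤ 2 * c := by
  rw [← Finset.mul_sum, mul_comm]
  gcongr
  exact sum_geometric_two_le m

theorem norm_newtonInterp_sub_le (hr : 0 < r) (hG : DifferentiableOn ℂ G (ball v r))
    (hGδ : ∀ x ∈ ball v r, ‖G x - x‖ ≤ δ) {m : ℕ} (hm : 200 * (m * δ) ≤ r) {t : ℂ}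
    (ht : ‖t‖ ≤ 8 * m) : ‖newtonInterp G m v t - v‖ ≤ r / 4 := by
  have hδ : 0 ≤ δ := (norm_nonneg _).trans (hGδ v (mem_ball_self hr))
  have hzero : Ring.choose t 0 • iterDiff G 0 v = v := by simp [iterDiff]
  rw [newtonInterp, Finset.sum_range_succ', hzero, add_sub_cancel_right]
  calc ‖∑ k ∈ Finset.range m, Ring.choose t (k + 1) • iterDiff G (k + 1) v‖
      ≤ ∑ k ∈ Finset.range m, r / 8 * (1 / 2 : ℝ) ^ k := norm_sum_le_of_le _ fun k hk ↦
        norm_ring_choose_smul_iterDiff_succ_le hδ hr hG hGδ hm ht (Finset.mem_range.mp hk)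
    _ ≤ 2 * (r / 8) := sum_range_mul_half_pow_le (by positivity) m
    _ = r / 4 := by ring

theorem norm_deriv_ring_choose_smul_iterDiff_le (hδ : 0 ≤ δ) (hr : 0 < r)
    (hG : DifferentiableOn ℂ G (ball v r)) (hGδ : ∀ x ∈ ball v r, ‖G x - x‖ ≤ δ)
    {m k : ℕ} (hm : 200 * (m * δ) ≤ r) (hk : k + 2 ≤ m) :
    ‖deriv (fun t : ℂ ↦ Ring.choose t (k + 2)) 0 • iterDiff G (k + 2) v‖ ≤
      8 * δ ^ 2 / r * (1 / 2) ^ k := by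
  have hkm : ((k + 2 : ℕ) : ℝ) ≤ m := mod_cast hk
  have hkδ : (k + 2 : ℕ) * δ ≤ m * δ := by gcongr
  push_cast at hkδ
  have hdiff := norm_iterDiff_succ_le hδ hG hGδ (k := k + 1)
    (by push_cast; linarith [mul_nonneg m.cast_nonneg hδ])
  push_cast at hdiff
  have hquarter : 2 * (k + 1 + 1) * δ / r ≤ 1 / 4 := by
    rw [div_le_div_iff₀ hr (by norm_num)]
    linarith [mul_nonneg m.cast_nonneg hδ]
  have hpow : (k + 1 + 1 : ℝ) ≤ 4 * 2 ^ k := by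
    have : k + 1 + 1 ≤ 4 * 2 ^ k := by
      rw [show 4 * 2 ^ k = 2 ^ (k + 1 + 1) by ring]
      exact Nat.lt_two_pow_self.le
    exact_mod_cast this
  rw [norm_smul]
  calc ‖deriv (fun t : ℂ ↦ Ring.choose t (k + 2)) 0‖ * ‖iterDiff G (k + 2) v‖
      ≤ 1 * (δ * (2 * (k + 1 + 1) * δ / r) ^ (k + 1)) := by
        gcongr
        exact norm_deriv_ring_choose_succ_zero_le (k + 1)
    _ = δ * (2 * (k + 1 + 1) * δ / r) * (2 * (k + 1 + 1) * δ / r) ^ k := by ring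
    _ ≤ δ * (2 * (4 * 2 ^ k) * δ / r) * (1 / 4) ^ k := by gcongr
    _ = 8 * δ ^ 2 / r * (1 / 2) ^ k := by
        rw [show (1 / 4 : ℝ) = 1 / 2 * (1 / 2) by norm_num, mul_pow, one_div, inv_pow]
        field_simp
        ring

theorem norm_interpField_sub_le (hr : 0 < r) (hG : DifferentiableOn ℂ G (ball v r))
    (hGδ : ∀ x ∈ ball v r, ‖G x - x‖ ≤ δ) {m : ℕ} (hm1 : 1 ≤ m) (hm : 200 * (m * δ) ≤ r) :
    ‖interpField G m v - (G v - v)‖ ≤ 16 * δ ^ 2 / r := by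
  have hδ : 0 ≤ δ := (norm_nonneg _).trans (hGδ v (mem_ball_self hr))
  obtain ⟨p, rfl⟩ : ∃ p, m = p + 1 := ⟨m - 1, by omega⟩
  have hsum : interpField G (p + 1) v - (G v - v) = ∑ k ∈ Finset.range p,
      deriv (fun t : ℂ ↦ Ring.choose t (k + 2)) 0 • iterDiff G (k + 2) v := by
    rw [interpField_eq_sum, Finset.sum_range_succ', Finset.sum_range_succ']
    simp [iterDiff]
  rw [hsum]
  calc ‖∑ k ∈ Finset.range p, deriv (fun t : ℂ ↦ Ring.choose t (k + 2)) 0 • iterDiff G (k + 2) v‖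
      ≤ ∑ k ∈ Finset.range p, 8 * δ ^ 2 / r * (1 / 2 : ℝ) ^ k := norm_sum_le_of_le _ fun k hk ↦
        norm_deriv_ring_choose_smul_iterDiff_le hδ hr hG hGδ hm
          (by linarith [Finset.mem_range.mp hk])
    _ ≤ 2 * (8 * δ ^ 2 / r) := sum_range_mul_half_pow_le (by positivity) p
    _ = 16 * δ ^ 2 / r := by ring

theorem newtonInterp_mem_ball (hr : 0 < r) (hG : DifferentiableOn ℂ G (ball v r))
    (hGδ : ∀ x ∈ ball v r, ‖G x - x‖ ≤ δ) {m : ℕ} (hm : 200 * (m * δ) ≤ r) {t : ℂ}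
    (ht : ‖t‖ ≤ 8 * m) : newtonInterp G m v t ∈ ball v r := by
  rw [mem_ball, dist_eq_norm]
  linarith [norm_newtonInterp_sub_le hr hG hGδ hm ht]

theorem norm_map_newtonInterp_sub_le (hr : 0 < r) (hG : DifferentiableOn ℂ G (ball v r))
    (hGδ : ∀ x ∈ ball v r, ‖G x - x‖ ≤ δ) {m : ℕ} (hm1 : 1 ≤ m) (hm : 400 * (m * δ) ≤ r) {t : ℂ}
    (ht : ‖t‖ ≤ 8 * m) : ‖G (newtonInterp G m v t) - newtonInterp G m (G v) t‖ ≤ r := by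
  have hGv := hGδ v (mem_ball_self hr)
  have hδ : 0 ≤ δ := (norm_nonneg _).trans hGv
  have hmδ : δ ≤ m * δ := le_mul_of_one_le_left hδ (mod_cast hm1)
  have hsub : ball (G v) (r / 2) ⊆ ball v r := ball_subset_ball' (by
    rw [dist_eq_norm]
    linarith)
  have hW := norm_newtonInterp_sub_le hr hG hGδ (by linarith) ht
  have hW' : ‖newtonInterp G m (G v) t - G v‖ ≤ r / 2 / 4 :=
    norm_newtonInterp_sub_le (by linarith) (hG.mono hsub) (fun x hx ↦ hGδ x (hsub hx))
      (by linarith) ht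
  have hGW := hGδ _ (newtonInterp_mem_ball hr hG hGδ (by linarith) ht)
  rw [show G (newtonInterp G m v t) - newtonInterp G m (G v) t =
    G (newtonInterp G m v t) - newtonInterp G m v t + (newtonInterp G m v t - v) -
      (G v - v) - (newtonInterp G m (G v) t - G v) by abel]
  refine (norm_sub_le_of_le (norm_sub_le_of_le (norm_add_le_of_le hGW hW) hGv) hW').trans ?_
  linarith

-- `t ↦ G (W_v t) - W_{G v} t`, where `W` is the Newton interpolation, vanishes at `0, …, m - 1`.
theorem norm_fderiv_interpField_sub_le [CompleteSpace V] (hr : 0 < r)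
    (hG : DifferentiableOn ℂ G (ball v r)) (hGδ : ∀ x ∈ ball v r, ‖G x - x‖ ≤ δ)
    {m : ℕ} (hm1 : 1 ≤ m) (hm : 400 * (m * δ) ≤ r) :
    ‖fderiv ℂ G v (interpField G m v) - interpField G m (G v)‖ ≤ r * Real.exp (-m) := by
  have hvb : v ∈ ball v r := mem_ball_self hr
  have hmδ : 0 ≤ m * δ := mul_nonneg m.cast_nonneg ((norm_nonneg _).trans (hGδ v hvb))
  have hWball : MapsTo (newtonInterp G m v) (ball 0 (8 * m)) (ball v r) := fun t ht ↦
    newtonInterp_mem_ball hr hG hGδ (by linarith [hmδ]) (mem_ball_zero_iff.mp ht).le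
  have hW := differentiable_newtonInterp G m v
  have hW' := differentiable_newtonInterp G m (G v)
  have hzeros : ∀ j : ℕ, j < m → G (newtonInterp G m v j) - newtonInterp G m (G v) j = 0 := by
    intro j hj
    rw [newtonInterp_natCast _ _ hj.le, newtonInterp_natCast _ _ hj.le,
      ← Function.iterate_succ_apply' G, Function.iterate_succ_apply, sub_self]
  have hGfderiv : HasFDerivAt G (fderiv ℂ G v) (newtonInterp G m v 0) := by
    rw [show newtonInterp G m v 0 = v by simpa using newtonInterp_natCast G v m.zero_le]
    exact (hG.differentiableAt (isOpen_ball.mem_nhds hvb)).hasFDerivAt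
  have hderiv := ((hGfderiv.comp_hasDerivAt (0 : ℂ) (hW 0).hasDerivAt).fun_sub
    (hW' 0).hasDerivAt).deriv
  simp only [Function.comp_apply] at hderiv
  unfold interpField
  rw [← hderiv]
  exact norm_deriv_zero_le_of_integer_zeros hm1
    ((hG.comp hW.differentiableOn hWball).sub hW'.differentiableOn)
    (fun t ht ↦ norm_map_newtonInterp_sub_le hr hG hGδ hm1 hm (mem_ball_zero_iff.mp ht).le) hzeros

end Interpolation

/-! ### Symplectic maps lifted to the contact extension of phase space -/

section Inverse

variable {𝕜 E : Type*} [NontriviallyNormedField 𝕜] [NormedAddCommGroup E] [NormedSpace 𝕜 E]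
  [CompleteSpace E] {τ : E → E} {U : Set E}

theorem hasFDerivAt_equiv_id_add {x : E} (hτ : DifferentiableAt 𝕜 τ x)
    (hx : ‖fderiv 𝕜 τ x‖ < 1) :
    ∃ A : E ≃L[𝕜] E, HasFDerivAt (fun y ↦ y + τ y) (A : E →L[𝕜] E) x := by
  let A := ContinuousLinearEquiv.ofUnit (Units.oneSub (-fderiv 𝕜 τ x) (by rwa [norm_neg]))
  have hA : (A : E →L[𝕜] E) = ContinuousLinearMap.id 𝕜 E + fderiv 𝕜 τ x :=
    sub_neg_eq_add (1 : E →L[𝕜] E) _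
  exact ⟨A, hA ▸ (hasFDerivAt_id x).add hτ.hasFDerivAt⟩

theorem exists_openPartialHomeomorph_id_add (hU : IsOpen U) (hτ : DifferentiableOn 𝕜 τ U)
    (hτU : LipschitzOnWith (1 / 2) τ U) :
    ∃ e : OpenPartialHomeomorph E E, ⇑e = (fun y ↦ y + τ y) ∧ e.source = U ∧
      DifferentiableOn 𝕜 e.symm e.target ∧
      ∀ x ρ, 0 ≤ ρ → closedBall x ρ ⊆ U → closedBall (x + τ x) (ρ / 2) ⊆ e.target := by
  have happrox : ApproximatesLinearOn (fun y ↦ y + τ y)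
      ((ContinuousLinearEquiv.refl 𝕜 E : E ≃L[𝕜] E) : E →L[𝕜] E) U (1 / 2) := by
    rw [ApproximatesLinearOn.approximatesLinearOn_iff_lipschitzOnWith]
    convert hτU using 1
    ext y
    simp
  set N := ‖((ContinuousLinearEquiv.refl 𝕜 E).symm : E →L[𝕜] E)‖₊ with hN
  have hN1 : N = ‖ContinuousLinearMap.id 𝕜 E‖₊ := rfl
  have hc : Subsingleton E ∨ (1 / 2 : NNReal) < N⁻¹ := by
    rcases subsingleton_or_nontrivial E with hE | hE
    · exact .inl hE
    · right
      rw [hN1, ContinuousLinearMap.nnnorm_id, inv_one]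
      exact NNReal.half_lt_self one_ne_zero
  refine ⟨happrox.toOpenPartialHomeomorph _ _ hc hU, rfl, rfl, fun x hx ↦ ?_, fun x ρ hρ hxρ ↦ ?_⟩
  · set e := happrox.toOpenPartialHomeomorph _ _ hc hU
    have hy : e.symm x ∈ U := e.map_target hx
    obtain ⟨A, hA⟩ := hasFDerivAt_equiv_id_add (hτ.differentiableAt (hU.mem_nhds hy))
      ((norm_fderiv_le_of_lipschitzOn 𝕜 (hU.mem_nhds hy) hτU).trans_lt (by norm_num))
    exact (e.hasFDerivAt_symm hx hA).differentiableAt.differentiableWithinAt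
  · rcases subsingleton_or_nontrivial E with hE | hE
    · exact fun y _ ↦ ⟨x, hxρ (mem_closedBall_self hρ), Subsingleton.elim _ _⟩
    · convert happrox.closedBall_subset_target hc hU hρ hxρ using 2
      rw [← hN, hN1, ContinuousLinearMap.nnnorm_id]
      norm_num
      ring

end Inverse

theorem norm_dotProduct_le_card_mul {ι 𝕜 : Type*} [Fintype ι] [NormedCommRing 𝕜] (x y : ι → 𝕜) :
    ‖x ⬝ᵥ y‖ ≤ Fintype.card ι * ‖x‖ * ‖y‖ := by
  calc ‖x ⬝ᵥ y‖ ≤ ∑ _i : ι, ‖x‖ * ‖y‖ := norm_sum_le_of_le _ fun i _ ↦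
        (norm_mul_le _ _).trans (by gcongr <;> apply norm_le_pi_norm)
    _ = Fintype.card ι * ‖x‖ * ‖y‖ := by
        rw [Finset.sum_const, Finset.card_univ, nsmul_eq_mul, mul_assoc]

/-- Complex phase space `(J, φ)` extended by a further coordinate `α`, on which exact symplectic
maps act by contact transformations. -/
abbrev ExtPhase (d : ℕ) := CPhase d × ℂ

/-- The contact form `J · dφ - dα` at the point `v`, evaluated on the tangent vector `w`. -/
def contactForm {d : ℕ} (v w : ExtPhase d) : ℂ := v.1.1 ⬝ᵥ w.1.2 - w.2

/-- A holomorphic contact transformation of `U` which is `δ`-close to the identity. -/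
structure IsNearIdContactOn {d : ℕ} (G : ExtPhase d → ExtPhase d) (U : Set (ExtPhase d))
    (δ : ℝ) : Prop where
  differentiableOn : DifferentiableOn ℂ G U
  norm_sub_le : ∀ v ∈ U, ‖G v - v‖ ≤ δ
  contactForm_fderiv : ∀ v ∈ U, ∀ w, contactForm (G v) (fderiv ℂ G v w) = contactForm v w

/-- The energy of the interpolating vector field of `G`, that is, its value under the contact
form. -/
noncomputable def approxEnergy {d : ℕ} (G : ExtPhase d → ExtPhase d) (m : ℕ)
    (v : ExtPhase d) : ℂ :=
  contactForm v (interpField G m v)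

section Contact

variable {d m : ℕ} {G : ExtPhase d → ExtPhase d} {U : Set (ExtPhase d)} {v : ExtPhase d} {r δ : ℝ}

theorem contactForm_sub (v w w' : ExtPhase d) :
    contactForm v (w - w') = contactForm v w - contactForm v w' := by
  simp only [contactForm, Prod.fst_sub, Prod.snd_sub, dotProduct_sub]
  ring

theorem norm_contactForm_le (v w : ExtPhase d) :
    ‖contactForm v w‖ ≤ (d * ‖v.1.1‖ + 1) * ‖w‖ := by
  have hdot := norm_dotProduct_le_card_mul v.1.1 w.1.2
  rw [Fintype.card_fin] at hdot
  calc ‖contactForm v w‖ ≤ d * ‖v.1.1‖ * ‖w.1.2‖ + ‖w.2‖ := (norm_sub_le _ _).trans (by gcongr)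
    _ ≤ d * ‖v.1.1‖ * ‖w‖ + ‖w‖ := by
        gcongr
        · exact (norm_snd_le w.1).trans (norm_fst_le w)
        · exact norm_snd_le w
    _ = (d * ‖v.1.1‖ + 1) * ‖w‖ := by ring

namespace IsNearIdContactOn

theorem norm_approxEnergy_map_sub_le (hG : IsNearIdContactOn G U δ) (hr : 0 < r)
    (hv : ball v r ⊆ U) (hm1 : 1 ≤ m) (hm : 400 * (m * δ) ≤ r) :
    ‖approxEnergy G m (G v) - approxEnergy G m v‖ ≤
      (d * ‖(G v).1.1‖ + 1) * (r * Real.exp (-m)) := by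
  have hX := norm_fderiv_interpField_sub_le hr (hG.differentiableOn.mono hv)
    (fun x hx ↦ hG.norm_sub_le x (hv hx)) hm1 hm
  rw [approxEnergy, approxEnergy, ← hG.contactForm_fderiv v (hv (mem_ball_self hr)),
    ← contactForm_sub]
  refine (norm_contactForm_le _ _).trans ?_
  rw [norm_sub_rev]
  gcongr

theorem norm_approxEnergy_sub_le (hG : IsNearIdContactOn G U δ) (hr : 0 < r)
    (hv : ball v r ⊆ U) (hm1 : 1 ≤ m) (hm : 200 * (m * δ) ≤ r) :
    ‖approxEnergy G m v - contactForm v (G v - v)‖ ≤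
      (d * ‖v.1.1‖ + 1) * (16 * δ ^ 2 / r) := by
  rw [approxEnergy, ← contactForm_sub]
  refine (norm_contactForm_le _ _).trans ?_
  gcongr
  exact norm_interpField_sub_le hr (hG.differentiableOn.mono hv)
    (fun x hx ↦ hG.norm_sub_le x (hv hx)) hm1 hm

end IsNearIdContactOn

end Contact

/-- The complex domain `‖J‖ < a`, `|Im φ i| < b`. -/
def phaseStrip (d : ℕ) (a b : ℝ) : Set (CPhase d) := {x | ‖x.1‖ < a ∧ ∀ i, |(x.2 i).im| < b}

/-- The part of the extended phase space lying over a `phaseStrip`. -/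
def extStrip (d : ℕ) (a b : ℝ) : Set (ExtPhase d) := Prod.fst ⁻¹' phaseStrip d a b

section Strip

variable {d : ℕ} {a b a' b' e : ℝ}

theorem isOpen_phaseStrip (d : ℕ) (a b : ℝ) : IsOpen (phaseStrip d a b) := by
  have : phaseStrip d a b = {x | ‖x.1‖ < a} ∩ ⋂ i, {x | |(x.2 i).im| < b} := by
    ext x
    simp [phaseStrip]
  rw [this]
  exact (isOpen_lt (by fun_prop) continuous_const).inter (isOpen_iInter_of_finite fun i ↦
    isOpen_lt (Complex.continuous_im.comp (by fun_prop)).abs continuous_const)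

theorem isOpen_extStrip (d : ℕ) (a b : ℝ) : IsOpen (extStrip d a b) :=
  (isOpen_phaseStrip d a b).preimage continuous_fst

theorem convex_phaseStrip (d : ℕ) (a b : ℝ) : Convex ℝ (phaseStrip d a b) := by
  intro x hx y hy p q hp hq hpq
  refine ⟨?_, fun i ↦ ?_⟩
  · exact mem_ball_zero_iff.mp (convex_ball 0 a (mem_ball_zero_iff.mpr hx.1)
      (mem_ball_zero_iff.mpr hy.1) hp hq hpq)
  · have := convex_ball (0 : ℝ) b (x := (x.2 i).im) (y := (y.2 i).im)
      (by simpa using hx.2 i) (by simpa using hy.2 i) hp hq hpq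
    simpa using this

theorem phaseStrip_mono (ha : a ≤ a') (hb : b ≤ b') : phaseStrip d a b ⊆ phaseStrip d a' b' :=
  fun _ hx ↦ ⟨hx.1.trans_le ha, fun i ↦ (hx.2 i).trans_le hb⟩

theorem closedBall_subset_phaseStrip (ha : a + e ≤ a') (hb : b + e ≤ b') {x : CPhase d}
    (hx : x ∈ phaseStrip d a b) : closedBall x e ⊆ phaseStrip d a' b' := by
  intro y hy
  rw [mem_closedBall, dist_eq_norm] at hy
  have hJ : ‖y.1 - x.1‖ ≤ e := (norm_fst_le (y - x)).trans hy
  have hφ : ‖y.2 - x.2‖ ≤ e := (norm_snd_le (y - x)).trans hy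
  refine ⟨by linarith [norm_sub_norm_le y.1 x.1, hx.1], fun i ↦ ?_⟩
  have him : |(y.2 i).im - (x.2 i).im| ≤ e :=
    (Complex.abs_im_le_norm (y.2 i - x.2 i)).trans ((norm_le_pi_norm (y.2 - x.2) i).trans hφ)
  linarith [abs_sub_abs_le_abs_sub (y.2 i).im (x.2 i).im, hx.2 i]

theorem closedBall_subset_extStrip (ha : a + e ≤ a') (hb : b + e ≤ b') {v : ExtPhase d}
    (hv : v ∈ extStrip d a b) : closedBall v e ⊆ extStrip d a' b' := fun _ hy ↦
  closedBall_subset_phaseStrip ha hb hv (mem_closedBall.mpr ((le_max_left _ _).trans hy))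

end Strip

/-- The gradient `∂χ/∂J` in the action variables. -/
noncomputable def gradAction {d : ℕ} (χ : CPhase d → ℂ) (x : CPhase d) : Fin d → ℂ :=
  fun i ↦ fderiv ℂ χ x (Pi.single i 1, 0)

/-- The gradient `∂χ/∂φ` in the angle variables. -/
noncomputable def gradAngle {d : ℕ} (χ : CPhase d → ℂ) (x : CPhase d) : Fin d → ℂ :=
  fun i ↦ fderiv ℂ χ x (0, Pi.single i 1)

section Gradient

variable {d : ℕ} {χ : CPhase d → ℂ} {U : Set (CPhase d)}

theorem fderiv_eq_gradAction_add_gradAngle (χ : CPhase d → ℂ) (x w : CPhase d) :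
    fderiv ℂ χ x w = gradAction χ x ⬝ᵥ w.1 + gradAngle χ x ⬝ᵥ w.2 := by
  have hw : w = ∑ i, (w.1 i • ((Pi.single i 1, 0) : CPhase d) +
      w.2 i • ((0, Pi.single i 1) : CPhase d)) := by
    ext j
    · simp [Prod.fst_sum, Finset.sum_apply, Pi.single_apply]
    · simp [Prod.snd_sum, Finset.sum_apply, Pi.single_apply]
  conv_lhs => rw [hw]
  simp only [map_sum, map_add, map_smul, smul_eq_mul, Finset.sum_add_distrib, dotProduct,
    gradAction, gradAngle, mul_comm]

theorem norm_gradAction_le (χ : CPhase d → ℂ) (x : CPhase d) :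
    ‖gradAction χ x‖ ≤ ‖fderiv ℂ χ x‖ :=
  (pi_norm_le_iff_of_nonneg (norm_nonneg _)).mpr fun i ↦
    (fderiv ℂ χ x).unit_le_opNorm _ (by simp [Prod.norm_def, Pi.norm_single])

theorem norm_gradAngle_le (χ : CPhase d → ℂ) (x : CPhase d) :
    ‖gradAngle χ x‖ ≤ ‖fderiv ℂ χ x‖ :=
  (pi_norm_le_iff_of_nonneg (norm_nonneg _)).mpr fun i ↦
    (fderiv ℂ χ x).unit_le_opNorm _ (by simp [Prod.norm_def, Pi.norm_single])

theorem differentiableOn_gradAngle (hχ : AnalyticOnNhd ℂ χ U) :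
    DifferentiableOn ℂ (gradAngle χ) U :=
  differentiableOn_pi.mpr fun _ ↦ hχ.fderiv.differentiableOn.clm_apply (differentiableOn_const _)

end Gradient

/-- The lift to `ExtPhase` of the symplectic map generated by `J̄ · φ + χ (J̄, φ)`, as a function of
the mixed coordinates `(J̄, φ)` (new actions, old angles) and `α`. -/
noncomputable def mixedGenMap {d : ℕ} (χ : CPhase d → ℂ) (p : ExtPhase d) : ExtPhase d :=
  ((p.1.1, p.1.2 + gradAction χ p.1), p.2 + p.1.1 ⬝ᵥ gradAction χ p.1 - χ p.1)

/-- The change of the coordinate `α` under `G` is the one prescribed by the generating function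
`J̄ · φ + χ (J̄, φ)`. -/
def HasGeneratingRelation {d : ℕ} (χ : CPhase d → ℂ) (G : ExtPhase d → ExtPhase d)
    (U : Set (ExtPhase d)) : Prop :=
  ∀ v ∈ U, (G v).2 - v.2 = (G v).1.1 ⬝ᵥ ((G v).1.2 - v.1.2) - χ ((G v).1.1, v.1.2)

section GeneratedMap

variable {d : ℕ} {χ : CPhase d → ℂ} {a b e μ : ℝ}

theorem exists_hasFDerivAt_mixedGenMap {p : ExtPhase d} (hχ : AnalyticAt ℂ χ p.1) :
    ∃ T : ExtPhase d →L[ℂ] ExtPhase d, HasFDerivAt (mixedGenMap χ) T p ∧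
      ∀ w, contactForm (mixedGenMap χ p) (T w) =
        (p.1.1 + gradAngle χ p.1) ⬝ᵥ w.1.2 - w.2 := by
  have hΓ : DifferentiableAt ℂ (gradAction χ) p.1 := differentiableAt_pi.mpr fun _ ↦
    hχ.fderiv.differentiableAt.clm_apply (differentiableAt_const _)
  have hfst : HasFDerivAt (fun p : ExtPhase d ↦ p.1) (.fst ℂ _ _) p := hasFDerivAt_fst
  have hΓp := hΓ.hasFDerivAt.comp p hfst
  have hχp := hχ.differentiableAt.hasFDerivAt.comp p hfst
  have hdot : HasFDerivAt (fun p : ExtPhase d ↦ ∑ i, p.1.1 i * gradAction χ p.1 i) _ p :=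
    HasFDerivAt.fun_sum fun i _ ↦ (hasFDerivAt_pi'.mp hfst.fst i).mul (hasFDerivAt_pi'.mp hΓp i)
  refine ⟨_, (hfst.fst.prodMk (hfst.snd.add hΓp)).prodMk ((hasFDerivAt_snd.add hdot).sub hχp),
    fun w ↦ ?_⟩
  have hdχ := fderiv_eq_gradAction_add_gradAngle χ p.1 w.1
  simp only [dotProduct] at hdχ
  simp only [contactForm, dotProduct, mixedGenMap, Finset.sum_add_distrib, mul_add, add_mul, hdχ,
    ContinuousLinearMap.prod_apply, ContinuousLinearMap.comp_apply, ContinuousLinearMap.proj_apply,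
    ContinuousLinearMap.coe_fst', ContinuousLinearMap.coe_snd', add_apply, sub_apply, sum_apply,
    smul_apply, smul_eq_mul, Pi.add_apply]
  ring

theorem norm_fderiv_le_on_phaseStrip (he : 0 < e) {E : Type*} [NormedAddCommGroup E]
    [NormedSpace ℂ E] {f : CPhase d → E} (hf : DifferentiableOn ℂ f (phaseStrip d a b))
    (hfμ : ∀ x ∈ phaseStrip d a b, ‖f x‖ ≤ μ) {x : CPhase d}
    (hx : x ∈ phaseStrip d (a - e) (b - e)) : ‖fderiv ℂ f x‖ ≤ 2 * μ / e := by
  have hsub : ball x e ⊆ phaseStrip d a b :=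
    ball_subset_closedBall.trans (closedBall_subset_phaseStrip (by simp) (by simp) hx)
  exact norm_fderiv_le_of_norm_le_on_ball he (hf.mono hsub) fun z hz ↦ hfμ z (hsub hz)

-- Two Cauchy estimates bound the second derivative of `χ` by `4 μ / e²`.
theorem lipschitzOnWith_gradAngle (he : 0 < e) (hμ : 8 * μ ≤ e ^ 2)
    (hχ : AnalyticOnNhd ℂ χ (phaseStrip d a b)) (hχμ : ∀ x ∈ phaseStrip d a b, ‖χ x‖ ≤ μ) :
    LipschitzOnWith (1 / 2) (gradAngle χ) (phaseStrip d (a - 2 * e) (b - 2 * e)) := by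
  have hsub : phaseStrip d (a - e) (b - e) ⊆ phaseStrip d a b :=
    phaseStrip_mono (by linarith) (by linarith)
  have hsub' : phaseStrip d (a - 2 * e) (b - 2 * e) ⊆ phaseStrip d (a - e - e) (b - e - e) :=
    phaseStrip_mono (by linarith) (by linarith)
  have hgrad : ∀ x ∈ phaseStrip d (a - e) (b - e), ‖gradAngle χ x‖ ≤ 2 * μ / e := fun x hx ↦
    (norm_gradAngle_le χ x).trans
      (norm_fderiv_le_on_phaseStrip he hχ.differentiableOn hχμ hx)
  have hdiff := (differentiableOn_gradAngle hχ).mono hsub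
  refine (convex_phaseStrip d _ _).lipschitzOnWith_of_nnnorm_fderiv_le (𝕜 := ℂ) (fun x hx ↦
    hdiff.differentiableAt ((isOpen_phaseStrip d _ _).mem_nhds
      (phaseStrip_mono (by linarith) (by linarith) hx))) fun x hx ↦ ?_
  rw [← NNReal.coe_le_coe, coe_nnnorm]
  calc ‖fderiv ℂ (gradAngle χ) x‖ ≤ 2 * (2 * μ / e) / e :=
        norm_fderiv_le_on_phaseStrip he hdiff hgrad (hsub' hx)
    _ = 4 * μ / e ^ 2 := by field_simp; ring
    _ ≤ 1 / 2 := by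
        rw [div_le_div_iff₀ (by positivity) two_pos]
        linarith
    _ = ((1 / 2 : NNReal) : ℝ) := by norm_num

theorem exists_mixedCoordinates (he : 0 < e) (hμ : 8 * μ ≤ e ^ 2)
    (hχ : AnalyticOnNhd ℂ χ (phaseStrip d a b)) (hχμ : ∀ x ∈ phaseStrip d a b, ‖χ x‖ ≤ μ) :
    ∃ Q : CPhase d → CPhase d, DifferentiableOn ℂ Q (phaseStrip d (a - 3 * e) (b - 3 * e)) ∧
      MapsTo Q (phaseStrip d (a - 3 * e) (b - 3 * e)) (phaseStrip d (a - 2 * e) (b - 2 * e)) ∧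
      (∀ x ∈ phaseStrip d (a - 3 * e) (b - 3 * e),
        (Q x).1 + gradAngle χ (Q x) = x.1 ∧ (Q x).2 = x.2) ∧
      ∀ y ∈ phaseStrip d (a - 2 * e) (b - 2 * e), Q (y.1 + gradAngle χ y, y.2) = y := by
  set U := phaseStrip d (a - 2 * e) (b - 2 * e)
  set τ : CPhase d → CPhase d := fun x ↦ (gradAngle χ x, 0)
  have hlip : LipschitzOnWith (1 / 2) τ U := by
    simpa using (lipschitzOnWith_gradAngle he hμ hχ hχμ).prodMk
      (LipschitzWith.const (0 : Fin d → ℂ)).lipschitzOnWith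
  have hτ : DifferentiableOn ℂ τ U := ((differentiableOn_gradAngle hχ).mono
    (phaseStrip_mono (by linarith) (by linarith))).prodMk (differentiableOn_const _)
  obtain ⟨E, hE, hEU, hEsymm, hball⟩ :=
    exists_openPartialHomeomorph_id_add (isOpen_phaseStrip d _ _) hτ hlip
  have htarget : phaseStrip d (a - 3 * e) (b - 3 * e) ⊆ E.target := by
    intro x hx
    refine hball x e he.le (closedBall_subset_phaseStrip (by linarith) (by linarith) hx) ?_
    have hgrad := (norm_gradAngle_le χ x).trans
      (norm_fderiv_le_on_phaseStrip he hχ.differentiableOn hχμ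
        (phaseStrip_mono (by linarith) (by linarith) hx))
    rw [mem_closedBall, dist_eq_norm, sub_add_cancel_left, norm_neg]
    calc ‖τ x‖ = ‖gradAngle χ x‖ := by simp [τ, Prod.norm_def]
      _ ≤ 2 * μ / e := hgrad
      _ ≤ e / 2 := by
          rw [div_le_div_iff₀ he two_pos]
          linarith [sq_nonneg e, sq e]
  have hsource : ∀ x ∈ phaseStrip d (a - 3 * e) (b - 3 * e), E.symm x ∈ U := fun x hx ↦
    hEU.subset (E.map_target (htarget hx))
  have hright : ∀ x ∈ phaseStrip d (a - 3 * e) (b - 3 * e), E.symm x + τ (E.symm x) = x := by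
    intro x hx
    simpa only [hE] using E.right_inv (htarget hx)
  refine ⟨E.symm, hEsymm.mono htarget, hsource, fun x hx ↦
    ⟨congrArg Prod.fst (hright x hx), ?_⟩, fun y hy ↦ ?_⟩
  · simpa [τ] using congrArg Prod.snd (hright x hx)
  · have hEy : E y = (y.1 + gradAngle χ y, y.2) := by simp [hE, τ, Prod.ext_iff]
    rw [← hEy, E.left_inv (hEU.superset hy)]

theorem norm_mixedGenMap_sub_le (he : 0 < e) {y : CPhase d} (α : ℂ) (hy : ‖y.1‖ ≤ a)
    (hχy : ‖χ y‖ ≤ μ) (hdχy : ‖fderiv ℂ χ y‖ ≤ 2 * μ / e) :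
    ‖mixedGenMap χ (y, α) - ((y.1 + gradAngle χ y, y.2), α)‖ ≤
      (2 / e * (1 + d * a) + 1) * μ := by
  have hμ : 0 ≤ μ := (norm_nonneg _).trans hχy
  have ha : 0 ≤ a := (norm_nonneg _).trans hy
  have hle : 2 * μ / e ≤ (2 / e * (1 + d * a) + 1) * μ := by
    rw [show (2 / e * (1 + d * a) + 1) * μ = 2 * μ / e + (2 / e * (d * a) + 1) * μ by ring]
    exact le_add_of_nonneg_right (by positivity)
  have hdiff : mixedGenMap χ (y, α) - ((y.1 + gradAngle χ y, y.2), α) =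
      ((-gradAngle χ y, gradAction χ y), y.1 ⬝ᵥ gradAction χ y - χ y) := by
    ext <;> simp [mixedGenMap, add_sub_right_comm, neg_add_eq_sub]
  rw [hdiff, Prod.norm_mk, Prod.norm_mk, norm_neg]
  refine max_le (max_le ?_ ?_) ?_
  · exact ((norm_gradAngle_le χ y).trans hdχy).trans hle
  · exact ((norm_gradAction_le χ y).trans hdχy).trans hle
  · calc ‖y.1 ⬝ᵥ gradAction χ y - χ y‖ ≤ d * ‖y.1‖ * ‖gradAction χ y‖ + ‖χ y‖ := by
          refine (norm_sub_le _ _).trans ?_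
          gcongr
          simpa using norm_dotProduct_le_card_mul y.1 (gradAction χ y)
      _ ≤ d * a * (2 * μ / e) + μ := by
          gcongr
          exact (norm_gradAction_le χ y).trans hdχy
      _ = (2 / e * (1 + d * a) + 1) * μ - 2 * μ / e := by ring
      _ ≤ (2 / e * (1 + d * a) + 1) * μ := sub_le_self _ (by positivity)

theorem contactForm_fderiv_mixedGenMap_comp {Q : CPhase d → CPhase d} {U : Set (CPhase d)}
    (hU : IsOpen U) (hQ : DifferentiableOn ℂ Q U)
    (hQU : ∀ x ∈ U, (Q x).1 + gradAngle χ (Q x) = x.1 ∧ (Q x).2 = x.2) {v : ExtPhase d}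
    (hv : v.1 ∈ U) (hχ : AnalyticAt ℂ χ (Q v.1)) :
    DifferentiableAt ℂ (fun v : ExtPhase d ↦ mixedGenMap χ (Q v.1, v.2)) v ∧
      ∀ w, contactForm (mixedGenMap χ (Q v.1, v.2))
        (fderiv ℂ (fun v : ExtPhase d ↦ mixedGenMap χ (Q v.1, v.2)) v w) = contactForm v w := by
  obtain ⟨T, hT, hTθ⟩ := exists_hasFDerivAt_mixedGenMap (p := (Q v.1, v.2)) hχ
  have hQv := (hQ.differentiableAt (hU.mem_nhds hv)).hasFDerivAt
  have hG := hT.comp v ((hQv.comp v (hasFDerivAt_fst (p := v))).prodMk hasFDerivAt_snd)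
  have hangle : ∀ w, (fderiv ℂ Q v.1 w).2 = w.2 := by
    have hsnd : (fun x ↦ (Q x).2) =ᶠ[nhds v.1] Prod.snd :=
      Filter.eventuallyEq_of_mem (hU.mem_nhds hv) fun x hx ↦ (hQU x hx).2
    exact fun w ↦ congrArg (· w) (hQv.snd.unique (hasFDerivAt_snd.congr_of_eventuallyEq hsnd))
  refine ⟨hG.differentiableAt, fun w ↦ ?_⟩
  have hGw : fderiv ℂ (fun v : ExtPhase d ↦ mixedGenMap χ (Q v.1, v.2)) v w =
      T (fderiv ℂ Q v.1 w.1, w.2) := congrArg (· w) hG.fderiv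
  rw [hGw, hTθ, contactForm, hangle, (hQU v.1 hv).1]

theorem exists_isNearIdContactOn_of_generatingFunction (he : 0 < e) (hμ : 8 * μ ≤ e ^ 2)
    (hχ : AnalyticOnNhd ℂ χ (phaseStrip d a b)) (hχμ : ∀ x ∈ phaseStrip d a b, ‖χ x‖ ≤ μ) :
    ∃ G : ExtPhase d → ExtPhase d,
      IsNearIdContactOn G (extStrip d (a - 3 * e) (b - 3 * e))
        ((2 / e * (1 + d * a) + 1) * μ) ∧
      HasGeneratingRelation χ G (extStrip d (a - 3 * e) (b - 3 * e)) ∧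
      ∀ y ∈ phaseStrip d (a - 2 * e) (b - 2 * e), ∀ α : ℂ,
        (G ((y.1 + gradAngle χ y, y.2), α)).1 = (y.1, y.2 + gradAction χ y) := by
  obtain ⟨Q, hQ, hQmaps, hQeq, hQinv⟩ := exists_mixedCoordinates he hμ hχ hχμ
  have hsub : phaseStrip d (a - 2 * e) (b - 2 * e) ⊆ phaseStrip d a b :=
    phaseStrip_mono (by linarith) (by linarith)
  have hcontact := fun (v : ExtPhase d) (hv : v ∈ extStrip d (a - 3 * e) (b - 3 * e)) ↦
    contactForm_fderiv_mixedGenMap_comp (isOpen_phaseStrip d _ _) hQ hQeq hv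
      (hχ _ (hsub (hQmaps hv)))
  refine ⟨fun v ↦ mixedGenMap χ (Q v.1, v.2), ⟨fun v hv ↦ (hcontact v hv).1.differentiableWithinAt,
    fun v hv ↦ ?_, fun v hv ↦ (hcontact v hv).2⟩, fun v hv ↦ ?_, fun y hy α ↦ ?_⟩
  · have hy := hsub (hQmaps hv)
    have := norm_mixedGenMap_sub_le he v.2 hy.1.le (hχμ _ hy)
      (norm_fderiv_le_on_phaseStrip he hχ.differentiableOn hχμ
        (phaseStrip_mono (by linarith) (by linarith) (hQmaps hv)))
    rwa [(hQeq v.1 hv).1, (hQeq v.1 hv).2] at this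
  · simp [mixedGenMap, ← (hQeq v.1 hv).2, add_sub_right_comm, neg_add_eq_sub]
  · simp only [hQinv y hy, mixedGenMap]

end GeneratedMap

/-- The composition `G (k - 1) ∘ ⋯ ∘ G 0`. -/
def seqComp {α : Type*} (G : ℕ → α → α) : ℕ → α → α
  | 0 => id
  | k + 1 => G k ∘ seqComp G k

theorem norm_seqComp_sub_le {E : Type*} [SeminormedAddCommGroup E] {G : ℕ → E → E} {U : Set E}
    {δ : ℝ} {n : ℕ} {v : E} (hδ : 0 ≤ δ) (hG : ∀ k < n, ∀ u ∈ U, ‖G k u - u‖ ≤ δ)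
    (hv : closedBall v (n * δ) ⊆ U) : ∀ k ≤ n, ‖seqComp G k v - v‖ ≤ k * δ
  | 0, _ => by simp [seqComp]
  | k + 1, hk => by
    have ih := norm_seqComp_sub_le hδ hG hv k (by omega)
    have hmem : seqComp G k v ∈ U := hv (mem_closedBall_iff_norm.mpr (ih.trans (by gcongr; omega)))
    calc ‖G k (seqComp G k v) - v‖
        = ‖(G k (seqComp G k v) - seqComp G k v) + (seqComp G k v - v)‖ := by
          rw [sub_add_sub_cancel]
      _ ≤ δ + k * δ := norm_add_le_of_le (hG k hk _ hmem) ih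
      _ = (k + 1 : ℕ) * δ := by
          push_cast
          ring

section ContactComposition

variable {d n : ℕ} {U U' : Set (ExtPhase d)} {δ δ' : ℝ}

theorem isNearIdContactOn_id : IsNearIdContactOn id U 0 where
  differentiableOn := differentiableOn_id
  norm_sub_le := by simp
  contactForm_fderiv := by simp

theorem IsNearIdContactOn.comp {F G : ExtPhase d → ExtPhase d} (hF : IsNearIdContactOn F U' δ')
    (hG : IsNearIdContactOn G U δ) (hU : IsOpen U) (hU' : IsOpen U') (hmaps : MapsTo G U U') :
    IsNearIdContactOn (F ∘ G) U (δ' + δ) where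
  differentiableOn := hF.differentiableOn.comp hG.differentiableOn hmaps
  norm_sub_le v hv := by
    rw [Function.comp_apply, ← sub_add_sub_cancel _ (G v)]
    exact norm_add_le_of_le (hF.norm_sub_le _ (hmaps hv)) (hG.norm_sub_le v hv)
  contactForm_fderiv v hv w := by
    rw [fderiv_comp v (hF.differentiableOn.differentiableAt (hU'.mem_nhds (hmaps hv)))
      (hG.differentiableOn.differentiableAt (hU.mem_nhds hv))]
    exact (hF.contactForm_fderiv _ (hmaps hv) _).trans (hG.contactForm_fderiv v hv w)

theorem isNearIdContactOn_seqComp {G : ℕ → ExtPhase d → ExtPhase d} (hU : IsOpen U)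
    (hU' : IsOpen U') (hδ : 0 ≤ δ) (hG : ∀ k < n, IsNearIdContactOn (G k) U' δ)
    (hsub : ∀ v ∈ U, closedBall v (n * δ) ⊆ U') :
    ∀ k ≤ n, IsNearIdContactOn (seqComp G k) U (k * δ)
  | 0, _ => by simpa using! isNearIdContactOn_id
  | k + 1, hk => by
    have ih := isNearIdContactOn_seqComp hU hU' hδ hG hsub k (by omega)
    have hmaps : MapsTo (seqComp G k) U U' := fun v hv ↦ hsub v hv
      (mem_closedBall_iff_norm.mpr ((ih.norm_sub_le v hv).trans (by gcongr; omega)))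
    have := (hG k hk).comp ih hU hU' hmaps
    rwa [show ((k + 1 : ℕ) : ℝ) * δ = δ + k * δ by push_cast; ring]

theorem HasGeneratingRelation.contactForm_map_sub {χ : CPhase d → ℂ} {G : ExtPhase d → ExtPhase d}
    (hG : HasGeneratingRelation χ G U) (v : ExtPhase d) {u : ExtPhase d} (hu : u ∈ U) :
    contactForm v (G u - u) = χ ((G u).1.1, u.1.2) -
      ((G u).1.1 - v.1.1) ⬝ᵥ ((G u).1.2 - u.1.2) := by
  simp only [contactForm, Prod.fst_sub, Prod.snd_sub, hG u hu, sub_dotProduct]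
  ring

-- Each step contributes its generating function `χ k`, which is close to `c`.
theorem norm_contactForm_seqComp_sub_le {G : ℕ → ExtPhase d → ExtPhase d} {χ : ℕ → CPhase d → ℂ}
    {a b η : ℝ} {v : ExtPhase d} {c : ℂ} (hδ : 0 ≤ δ)
    (hG : ∀ k < n, ∀ u ∈ extStrip d a b, ‖G k u - u‖ ≤ δ)
    (hGχ : ∀ k < n, HasGeneratingRelation (χ k) (G k) (extStrip d a b))
    (hv : closedBall v (n * δ) ⊆ extStrip d a b)
    (hχ : ∀ k < n, ∀ x ∈ phaseStrip d a b, ‖x.1 - v.1.1‖ ≤ n * δ → ‖χ k x - c‖ ≤ η) :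
    ∀ k ≤ n, ‖contactForm v (seqComp G k v - v) - k * c‖ ≤ k * (d * (n * δ) * δ + η)
  | 0, _ => by simp [seqComp, contactForm]
  | k + 1, hk => by
    have ih := norm_contactForm_seqComp_sub_le hδ hG hGχ hv hχ k (by omega)
    have hball : ∀ j ≤ n, seqComp G j v ∈ closedBall v (n * δ) := fun j hj ↦
      mem_closedBall_iff_norm.mpr ((norm_seqComp_sub_le hδ hG hv j hj).trans (by gcongr))
    set u := seqComp G k v
    have hu : u ∈ extStrip d a b := hv (hball k (by omega))
    have hGu : G k u ∈ closedBall v (n * δ) := hball (k + 1) hk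
    have hJ : ‖(G k u).1.1 - v.1.1‖ ≤ n * δ := (norm_fst_le (G k u - v).1).trans
      ((norm_fst_le (G k u - v)).trans (mem_closedBall_iff_norm.mp hGu))
    have hφ : ‖(G k u).1.2 - u.1.2‖ ≤ δ := (norm_snd_le (G k u - u).1).trans
      ((norm_fst_le (G k u - u)).trans (hG k hk u hu))
    have hdot : ‖((G k u).1.1 - v.1.1) ⬝ᵥ ((G k u).1.2 - u.1.2)‖ ≤ d * (n * δ) * δ := by
      refine (norm_dotProduct_le_card_mul _ _).trans ?_
      rw [Fintype.card_fin]
      gcongr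
    have hsplit : contactForm v (seqComp G (k + 1) v - v) - ((k + 1 : ℕ) : ℂ) * c =
        contactForm v (u - v) - k * c + (χ k ((G k u).1.1, u.1.2) - c -
          ((G k u).1.1 - v.1.1) ⬝ᵥ ((G k u).1.2 - u.1.2)) := by
      have hGu : contactForm v (G k u - v) = contactForm v (G k u - u) + contactForm v (u - v) := by
        simp only [contactForm_sub]
        ring
      change contactForm v (G k u - v) - _ = _
      rw [hGu, (hGχ k hk).contactForm_map_sub v hu]
      push_cast
      ring
    calc ‖contactForm v (seqComp G (k + 1) v - v) - ((k + 1 : ℕ) : ℂ) * c‖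
        ≤ k * (d * (n * δ) * δ + η) + (η + d * (n * δ) * δ) := by
          rw [hsplit]
          exact norm_add_le_of_le ih (norm_sub_le_of_le
            (hχ k hk _ ⟨(hv hGu).1, hu.2⟩ hJ) hdot)
      _ = (k + 1 : ℕ) * (d * (n * δ) * δ + η) := by
          push_cast
          ring

end ContactComposition

/-! ### Complexification and convexity of the integrable Hamiltonian -/

section Complexification

variable {d : ℕ}

@[simp]
theorem cx_apply (x : Fin d → ℝ) (i : Fin d) : cx d x i = x i := rfl

theorem cx_add (x y : Fin d → ℝ) : cx d (x + y) = cx d x + cx d y := by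
  ext i
  simp

theorem cx_sub (x y : Fin d → ℝ) : cx d (x - y) = cx d x - cx d y := by
  ext i
  simp

theorem cx_dotProduct (x y : Fin d → ℝ) : cx d x ⬝ᵥ cx d y = ((x ⬝ᵥ y : ℝ) : ℂ) := by
  simp [dotProduct]

theorem norm_cx (x : Fin d → ℝ) : ‖cx d x‖ = ‖x‖ := by
  simp [Pi.norm_def, cx]

theorem dist_cx (x y : Fin d → ℝ) : dist (cx d x) (cx d y) = dist x y := by
  rw [dist_eq_norm, dist_eq_norm, ← cx_sub, norm_cx]

theorem cx_single (i : Fin d) : cx d (Pi.single i 1) = Pi.single i 1 := by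
  ext j
  by_cases hj : j = i
  · subst hj
    simp
  · simp [hj]

theorem hasFDerivAt_cx (x : Fin d → ℝ) :
    HasFDerivAt (cx d) (.pi fun i ↦ Complex.ofRealCLM.comp (.proj i)) x :=
  ContinuousLinearMap.hasFDerivAt (.pi fun i ↦ Complex.ofRealCLM.comp (.proj i))

/-- The formal power series over `ℂ` with the same Taylor coefficients in coordinates as the real
series `p`. -/
noncomputable def cxSeries (p : FormalMultilinearSeries ℝ (Fin d → ℝ) ℝ) :
    FormalMultilinearSeries ℂ (Fin d → ℂ) ℂ := fun n ↦
  ∑ f : Fin n → Fin d, ((p n fun j ↦ Pi.single (f j) 1 : ℝ) : ℂ) •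
    (ContinuousMultilinearMap.mkPiAlgebra ℂ (Fin n) ℂ).compContinuousLinearMap
      fun j ↦ .proj (f j)

theorem cxSeries_apply (p : FormalMultilinearSeries ℝ (Fin d → ℝ) ℝ) (n : ℕ)
    (m : Fin n → Fin d → ℂ) :
    cxSeries p n m = ∑ f : Fin n → Fin d, ((p n fun j ↦ Pi.single (f j) 1 : ℝ) : ℂ) *
      ∏ j, m j (f j) := by
  simp [cxSeries]

theorem cxSeries_apply_cx (p : FormalMultilinearSeries ℝ (Fin d → ℝ) ℝ) (n : ℕ)
    (y : Fin d → ℝ) : cxSeries p n (fun _ ↦ cx d y) = ((p n fun _ ↦ y : ℝ) : ℂ) := by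
  have hy : (fun _ : Fin n ↦ y) = fun _ ↦ ∑ i, y i • (Pi.single i 1 : Fin d → ℝ) := by
    ext _ i
    simp [Finset.sum_apply, Pi.single_apply]
  rw [cxSeries_apply, hy, ContinuousMultilinearMap.map_sum, Complex.ofReal_sum]
  refine Finset.sum_congr rfl fun f _ ↦ ?_
  rw [ContinuousMultilinearMap.map_smul_univ]
  simp [mul_comm]

theorem norm_cxSeries_le (p : FormalMultilinearSeries ℝ (Fin d → ℝ) ℝ) (n : ℕ) :
    ‖cxSeries p n‖ ≤ (d : ℝ) ^ n * ‖p n‖ := by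
  refine ContinuousMultilinearMap.opNorm_le_bound (by positivity) fun m ↦ ?_
  have hterm : ∀ f : Fin n → Fin d,
      ‖((p n fun j ↦ Pi.single (f j) 1 : ℝ) : ℂ) * ∏ j, m j (f j)‖ ≤ ‖p n‖ * ∏ j, ‖m j‖ := by
    intro f
    rw [norm_mul, norm_prod, Complex.norm_real]
    gcongr
    · simpa [Pi.norm_single] using (p n).le_opNorm fun j ↦ Pi.single (f j) 1
    · exact norm_le_pi_norm _ _
  calc ‖cxSeries p n m‖ ≤ ∑ _f : Fin n → Fin d, ‖p n‖ * ∏ j, ‖m j‖ := by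
        rw [cxSeries_apply]
        exact norm_sum_le_of_le _ fun f _ ↦ hterm f
    _ = (d : ℝ) ^ n * ‖p n‖ * ∏ j, ‖m j‖ := by simp [mul_assoc]

theorem div_le_radius_cxSeries {p : FormalMultilinearSeries ℝ (Fin d → ℝ) ℝ} {R : NNReal}
    (hR : R < p.radius) : ((R / (d + 1) : NNReal) : ENNReal) ≤ (cxSeries p).radius := by
  obtain ⟨C, -, hC⟩ := p.norm_mul_pow_le_of_lt_radius hR
  refine (cxSeries p).le_radius_of_bound C fun n ↦ ?_
  calc ‖cxSeries p n‖ * ((R / (d + 1) : NNReal) : ℝ) ^ n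
      ≤ (d : ℝ) ^ n * ‖p n‖ * ((R : ℝ) / (d + 1)) ^ n := by
        push_cast
        gcongr
        exact norm_cxSeries_le p n
    _ = ‖p n‖ * (d * (R / (d + 1))) ^ n := by ring
    _ ≤ ‖p n‖ * R ^ n := by
        gcongr
        rw [← mul_div_assoc, div_le_iff₀ (by positivity)]
        linarith [R.2, mul_comm (d : ℝ) R]
    _ ≤ C := hC n

/-- On the ball of radius `l` about `I`, the analytic function `Hc` extends `h` to complex
arguments. -/
structure IsComplexification (h : (Fin d → ℝ) → ℝ) (Hc : (Fin d → ℂ) → ℂ) (I : Fin d → ℝ)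
    (l : ℝ) : Prop where
  analyticOnNhd : AnalyticOnNhd ℂ Hc (ball (cx d I) l)
  apply_cx : ∀ x ∈ ball I l, Hc (cx d x) = h x

theorem IsComplexification.mono {h : (Fin d → ℝ) → ℝ} {Hc : (Fin d → ℂ) → ℂ} {I I' : Fin d → ℝ}
    {l l' : ℝ} (hHc : IsComplexification h Hc I l) (hI : l' + dist I' I ≤ l) :
    IsComplexification h Hc I' l' where
  analyticOnNhd := hHc.analyticOnNhd.mono (ball_subset_ball' (by rwa [dist_cx]))
  apply_cx x hx := hHc.apply_cx x (ball_subset_ball' hI hx)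

theorem exists_isComplexification {h : (Fin d → ℝ) → ℝ} {I : Fin d → ℝ}
    (hh : AnalyticAt ℝ h I) : ∃ l > 0, ∃ Hc, IsComplexification h Hc I l := by
  obtain ⟨p, ρ, hp⟩ := hh
  obtain ⟨R, hR0, hRρ⟩ := ENNReal.lt_iff_exists_nnreal_btwn.1 hp.r_pos
  have hR : 0 < R := mod_cast hR0
  have hrad := div_le_radius_cxSeries (hRρ.trans_le hp.r_le)
  have hl : 0 < R / (d + 1) := by positivity
  have hsum := ((cxSeries p).hasFPowerSeriesOnBall
    ((ENNReal.coe_pos.mpr hl).trans_le hrad)).comp_sub (cx d I)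
  rw [zero_add] at hsum
  refine ⟨(R / (d + 1) : NNReal), hl, fun z ↦ (cxSeries p).sum (z - cx d I), fun z hz ↦
    hsum.analyticOnNhd z ?_, fun x hx ↦ ?_⟩
  · exact Metric.mem_eball.mpr ((edist_lt_coe.mpr hz).trans_le hrad)
  · have hxI : x - I ∈ eball 0 ρ := by
      have hlR : R / (d + 1) ≤ R := div_le_self R.2 (by simp)
      rw [Metric.mem_eball, edist_zero_right, ← edist_eq_enorm_sub]
      exact (edist_lt_coe.mpr (lt_of_lt_of_le hx hlR)).trans hRρ
    have hterms := (Complex.hasSum_ofReal (L := .unconditional _)).2 (hp.hasSum hxI)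
    simp only [FormalMultilinearSeries.sum, ← cx_sub, cxSeries_apply_cx]
    rw [hterms.tsum_eq, add_sub_cancel]

theorem exists_isComplexification_of_isCompact {h : (Fin d → ℝ) → ℝ} {K : Set (Fin d → ℝ)}
    (hK : IsCompact K) (hh : AnalyticOnNhd ℝ h K) :
    ∃ l > 0, ∃ M : ℝ, ∀ I ∈ K, ∃ Hc, IsComplexification h Hc I l ∧
      ∀ z ∈ ball (cx d I) l, ‖Hc z‖ ≤ M := by
  refine hK.induction_on (p := fun S ↦ ∃ l > 0, ∃ M : ℝ, ∀ I ∈ S, ∃ Hc,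
    IsComplexification h Hc I l ∧ ∀ z ∈ ball (cx d I) l, ‖Hc z‖ ≤ M) ?_ ?_ ?_ ?_
  · exact ⟨1, one_pos, 0, fun I hI ↦ absurd hI (notMem_empty I)⟩
  · rintro S T hST ⟨l, hl, M, hM⟩
    exact ⟨l, hl, M, fun I hI ↦ hM I (hST hI)⟩
  · rintro S T ⟨l, hl, M, hM⟩ ⟨l', hl', M', hM'⟩
    refine ⟨min l l', lt_min hl hl', max M M', ?_⟩
    rintro I (hI | hI)
    · obtain ⟨Hc, hHc, hb⟩ := hM I hI
      exact ⟨Hc, hHc.mono (by simp), fun z hz ↦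
        (hb z (ball_subset_ball (min_le_left _ _) hz)).trans (le_max_left _ _)⟩
    · obtain ⟨Hc, hHc, hb⟩ := hM' I hI
      exact ⟨Hc, hHc.mono (by simp), fun z hz ↦
        (hb z (ball_subset_ball (min_le_right _ _) hz)).trans (le_max_right _ _)⟩
  · intro c hc
    obtain ⟨l, hl, Hc, hHc⟩ := exists_isComplexification (hh c hc)
    obtain ⟨l', hl', hb⟩ := Metric.continuousAt_iff.1
      (hHc.analyticOnNhd _ (mem_ball_self hl)).continuousAt 1 one_pos
    refine ⟨ball c (min l l' / 2), mem_nhdsWithin_of_mem_nhds (ball_mem_nhds _ (by positivity)),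
      min l l' / 2, by positivity, ‖Hc (cx d c)‖ + 1, fun I hI ↦ ⟨Hc, hHc.mono ?_, fun z hz ↦ ?_⟩⟩
    · linarith [min_le_left l l', mem_ball.1 hI]
    · have hzc : dist z (cx d c) < l' := by
        linarith [dist_triangle z (cx d I) (cx d c), dist_cx I c, min_le_right l l',
          mem_ball.1 hI, mem_ball.1 hz]
      linarith [hb hzc, dist_eq_norm (Hc z) (Hc (cx d c)), norm_sub_norm_le (Hc z) (Hc (cx d c))]

/-- The vector field `ω` is the frequency map (gradient) of `h` at the points of `U`. -/
def IsFrequencyMapOn (h : (Fin d → ℝ) → ℝ) (ω : (Fin d → ℝ) → Fin d → ℝ)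
    (U : Set (Fin d → ℝ)) : Prop :=
  ∀ I ∈ U, HasFDerivAt h
    (∑ i, ω I i • (ContinuousLinearMap.proj i : (Fin d → ℝ) →L[ℝ] ℝ)) I

theorem clm_eq_of_apply_cx {L L' : (Fin d → ℂ) →L[ℂ] ℂ} (hL : ∀ w, L (cx d w) = L' (cx d w)) :
    L = L' := by
  refine ContinuousLinearMap.coe_inj.1 (LinearMap.pi_ext' fun i ↦ LinearMap.ext_ring ?_)
  simpa [cx_single] using hL (Pi.single i 1)

theorem IsComplexification.fderiv_apply {h : (Fin d → ℝ) → ℝ} {Hc : (Fin d → ℂ) → ℂ}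
    {I : Fin d → ℝ} {l : ℝ} (hHc : IsComplexification h Hc I l) {ω : (Fin d → ℝ) → Fin d → ℝ}
    (hω : IsFrequencyMapOn h ω (ball I l)) {x : Fin d → ℝ} (hx : x ∈ ball I l) (z : Fin d → ℂ) :
    fderiv ℂ Hc (cx d x) z = cx d (ω x) ⬝ᵥ z := by
  have hxc : cx d x ∈ ball (cx d I) l := by rwa [mem_ball, dist_cx]
  have hHc' := ((hHc.analyticOnNhd _ hxc).differentiableAt.hasFDerivAt.restrictScalars ℝ).comp x
    (hasFDerivAt_cx x)
  have heq : (fun y ↦ Hc (cx d y)) =ᶠ[nhds x] fun y ↦ (h y : ℂ) := by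
    filter_upwards [isOpen_ball.mem_nhds hx] with y hy using hHc.apply_cx y hy
  have hreal := (Complex.ofRealCLM.hasFDerivAt.comp x (hω x hx)).congr_of_eventuallyEq heq
  let L' : (Fin d → ℂ) →L[ℂ] ℂ := ∑ i, cx d (ω x) i • .proj i
  have hL' : ∀ z, L' z = cx d (ω x) ⬝ᵥ z := fun z ↦ by simp [L', dotProduct]
  rw [← hL']
  refine congrArg (fun L : (Fin d → ℂ) →L[ℂ] ℂ ↦ L z) (clm_eq_of_apply_cx fun w ↦ ?_)
  rw [hL', cx_dotProduct]
  simpa [dotProduct] using! congrArg (fun L ↦ L w) (hHc'.unique hreal)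

/-- `Hc` is a complexification of `h` near `I` whose gradient on real points is `ω`, with quadratic
Taylor remainder at `I` bounded with constant `Λ`. -/
structure IsLocalComplexification (h : (Fin d → ℝ) → ℝ) (ω : (Fin d → ℝ) → Fin d → ℝ)
    (Hc : (Fin d → ℂ) → ℂ) (I : Fin d → ℝ) (l Λ : ℝ) : Prop
    extends IsComplexification h Hc I l where
  fderiv_cx : ∀ x ∈ ball I l, ∀ z, fderiv ℂ Hc (cx d x) z = cx d (ω x) ⬝ᵥ z
  norm_remainder_le : ∀ z : Fin d → ℂ, ‖z‖ < l →
    ‖Hc (cx d I + z) - h I - cx d (ω I) ⬝ᵥ z‖ ≤ Λ * ‖z‖ ^ 2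

theorem exists_isLocalComplexification {h : (Fin d → ℝ) → ℝ} {ω : (Fin d → ℝ) → Fin d → ℝ}
    {K U : Set (Fin d → ℝ)} {σ : ℝ} (hσ : 0 < σ) (hK : IsCompact K) (hU : ∀ I ∈ K, ball I σ ⊆ U)
    (hh : AnalyticOnNhd ℝ h U) (hω : IsFrequencyMapOn h ω U) :
    ∃ l > 0, l ≤ σ ∧ ∃ Λ > 0, ∀ I ∈ K, ∃ Hc, IsLocalComplexification h ω Hc I l Λ := by
  obtain ⟨l₁, hl₁, M, hM⟩ := exists_isComplexification_of_isCompact hK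
    (hh.mono fun I hI ↦ hU I hI (mem_ball_self hσ))
  have hl : 0 < min l₁ σ := lt_min hl₁ hσ
  refine ⟨min l₁ σ, hl, min_le_right _ _, 4 * (|M| + 1) / min l₁ σ ^ 2, by positivity,
    fun I hI ↦ ?_⟩
  obtain ⟨Hc, hHc₁, hb⟩ := hM I hI
  have hHc : IsComplexification h Hc I (min l₁ σ) := hHc₁.mono (by simp)
  have hgrad : ∀ x ∈ ball I (min l₁ σ), ∀ z, fderiv ℂ Hc (cx d x) z = cx d (ω x) ⬝ᵥ z :=
    fun x hx ↦ hHc.fderiv_apply (fun y hy ↦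
      hω y (hU I hI (ball_subset_ball (min_le_right _ _) hy))) hx
  have hHcM : ∀ z ∈ ball (cx d I) (min l₁ σ), ‖Hc z‖ ≤ |M| + 1 := fun z hz ↦
    (hb z (ball_subset_ball (min_le_left _ _) hz)).trans (by linarith [le_abs_self M])
  refine ⟨Hc, hHc, hgrad, fun z hz ↦ ?_⟩
  rw [← hHc.apply_cx I (mem_ball_self hl), ← hgrad I (mem_ball_self hl)]
  exact norm_sub_sub_fderiv_le_of_norm_le_on_ball hHc.analyticOnNhd.differentiableOn hHcM hz

end Complexification

section Convexity

theorem half_mul_le_of_le_deriv_deriv {g g' g'' : ℝ → ℝ} {c : ℝ}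
    (hg : ∀ t ∈ Icc (0 : ℝ) 1, HasDerivAt g (g' t) t)
    (hg' : ∀ t ∈ Icc (0 : ℝ) 1, HasDerivAt g' (g'' t) t)
    (hc : ∀ t ∈ Icc (0 : ℝ) 1, c ≤ g'' t) : c / 2 ≤ g 1 - g 0 - g' 0 := by
  have hlow : ∀ t ∈ Icc (0 : ℝ) 1, c * t ≤ g' t - g' 0 := by
    intro t ht
    simpa using (convex_Icc (0 : ℝ) 1).mul_sub_le_image_sub_of_le_deriv
      (fun u hu ↦ (hg' u hu).continuousAt.continuousWithinAt)
      (fun u hu ↦ (hg' u (interior_subset hu)).differentiableAt.differentiableWithinAt)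
      (fun u hu ↦ (hg' u (interior_subset hu)).deriv ▸ hc u (interior_subset hu))
      0 ⟨le_rfl, zero_le_one⟩ t ht ht.1
  have hk : ∀ t ∈ Icc (0 : ℝ) 1,
      HasDerivAt (fun t ↦ g t - c / 2 * t ^ 2) (g' t - c * t) t := by
    intro t ht
    refine ((hg t ht).sub (((hasDerivAt_id t).pow 2).const_mul (c / 2))).congr_deriv ?_
    simp only [id_eq]
    ring
  have hmain := (convex_Icc (0 : ℝ) 1).mul_sub_le_image_sub_of_le_deriv (C := g' 0)
    (fun u hu ↦ (hk u hu).continuousAt.continuousWithinAt)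
    (fun u hu ↦ (hk u (interior_subset hu)).differentiableAt.differentiableWithinAt)
    (fun u hu ↦ (hk u (interior_subset hu)).deriv ▸ by linarith [hlow u (interior_subset hu)])
    0 ⟨le_rfl, zero_le_one⟩ 1 ⟨zero_le_one, le_rfl⟩ zero_le_one
  norm_num at hmain
  linarith

variable {d : ℕ} {h : (Fin d → ℝ) → ℝ} {ω : (Fin d → ℝ) → Fin d → ℝ} {U : Set (Fin d → ℝ)}
  {ν : ℝ}

/-- The symmetric part of the derivative of `ω` is bounded below by `ν` on `U`; for `ω` the
frequency map of `h` this is strong convexity of `h`. -/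
def IsStronglyMonotoneOn (ν : ℝ) (ω : (Fin d → ℝ) → Fin d → ℝ) (U : Set (Fin d → ℝ)) : Prop :=
  ∀ I ∈ U, ∀ v : Fin d → ℝ, ν * ∑ i, v i ^ 2 ≤ ∑ i, fderiv ℝ ω I v i * v i

theorem IsStronglyMonotoneOn.differentiableAt (hν : 0 < ν) (hω : IsStronglyMonotoneOn ν ω U)
    {I : Fin d → ℝ} (hI : I ∈ U) : DifferentiableAt ℝ ω I := by
  by_contra hnd
  have hle := hω I hI 1
  rw [fderiv_zero_of_not_differentiableAt hnd] at hle
  have hd : (d : ℝ) ≤ 0 := nonpos_of_mul_nonpos_right (by simpa using hle) hν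
  obtain rfl : d = 0 := by exact_mod_cast hd.antisymm (Nat.cast_nonneg d)
  exact hnd (hasFDerivAt_of_subsingleton ω I).differentiableAt

theorem IsFrequencyMapOn.half_mul_sum_sq_le (hω : IsFrequencyMapOn h ω U) (hν : 0 < ν)
    (hconv : IsStronglyMonotoneOn ν ω U) {I v : Fin d → ℝ}
    (hU : ∀ t ∈ Icc (0 : ℝ) 1, I + t • v ∈ U) :
    ν / 2 * ∑ i, v i ^ 2 ≤ h (I + v) - h I - ω I ⬝ᵥ v := by
  have hline : ∀ t : ℝ, HasDerivAt (fun t : ℝ ↦ I + t • v) v t := fun t ↦ by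
    simpa using ((hasDerivAt_id t).smul_const v).const_add I
  have hh : ∀ t ∈ Icc (0 : ℝ) 1,
      HasDerivAt (fun t : ℝ ↦ h (I + t • v)) (ω (I + t • v) ⬝ᵥ v) t := by
    intro t ht
    refine ((hω _ (hU t ht)).comp_hasDerivAt t (hline t)).congr_deriv ?_
    simp [dotProduct]
  have hh' : ∀ t ∈ Icc (0 : ℝ) 1, HasDerivAt (fun t : ℝ ↦ ω (I + t • v) ⬝ᵥ v)
      (fderiv ℝ ω (I + t • v) v ⬝ᵥ v) t := by
    intro t ht
    have hωt := (hconv.differentiableAt hν (hU t ht)).hasFDerivAt.comp_hasDerivAt t (hline t)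
    exact HasDerivAt.fun_sum fun i _ ↦ (hasDerivAt_pi.1 hωt i).mul_const (v i)
  have hmain := half_mul_le_of_le_deriv_deriv hh hh' fun t ht ↦ hconv _ (hU t ht) v
  simp only [one_smul, zero_smul, add_zero] at hmain
  linarith

end Convexity

/-! ### Scaling near a resonant torus -/

/-- The complex neighbourhood `dist (I, K) ≤ σ`, `|Im φ i| ≤ r` of the real points over `K`. -/
def complexNhd {d : ℕ} (K : Set (Fin d → ℝ)) (σ r : ℝ) : Set (CPhase d) :=
  {z | (∃ y ∈ K, dist z.1 (cx d y) ≤ σ) ∧ ∀ i, |(z.2 i).im| ≤ r}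

/-- `s` is analytic and bounded by `M` on `complexNhd K σ r`, and real at its real points. -/
structure IsPerturbation {d : ℕ} (s : CPhase d → ℂ) (K : Set (Fin d → ℝ)) (σ r M : ℝ) : Prop where
  analyticOnNhd : AnalyticOnNhd ℂ s (complexNhd K σ r)
  norm_le : ∀ z ∈ complexNhd K σ r, ‖s z‖ ≤ M
  im_eq_zero : ∀ x : RPhase d, (cx d x.1, cx d x.2) ∈ complexNhd K σ r →
    (s (cx d x.1, cx d x.2)).im = 0

/-- `x'` is the image of `x` under the exact symplectic map generated by `Ī · φ + h Ī + ε s (Ī, φ)`,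
where `ω` is the gradient of `h`. -/
structure IsStep {d : ℕ} (ω : (Fin d → ℝ) → Fin d → ℝ) (s : CPhase d → ℂ) (ε : ℝ)
    (x x' : RPhase d) : Prop where
  action : ∀ i, x'.1 i = x.1 i - ε * (gradAngle s (cx d x'.1, cx d x.2) i).re
  angle : ∀ i, x'.2 i = x.2 i + ω x'.1 i + ε * (gradAction s (cx d x'.1, cx d x.2) i).re

section Real

variable {d : ℕ} {s : CPhase d → ℂ} {K : Set (Fin d → ℝ)} {σ r M ε : ℝ} {I : Fin d → ℝ}

theorem hasDerivAt_comp_add_smul {𝕜 E F : Type*} [NontriviallyNormedField 𝕜]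
    [NormedAddCommGroup E] [NormedSpace 𝕜 E] [NormedAddCommGroup F] [NormedSpace 𝕜 F] {f : E → F}
    {p : E} (hf : DifferentiableAt 𝕜 f p) (q : E) :
    HasDerivAt (fun t : 𝕜 ↦ f (p + t • q)) (fderiv 𝕜 f p q) 0 := by
  have hline : HasDerivAt (fun t : 𝕜 ↦ p + t • q) q 0 := by
    simpa using ((hasDerivAt_id (0 : 𝕜)).smul_const q).const_add p
  have hf' : HasFDerivAt f (fderiv 𝕜 f p) (p + (0 : 𝕜) • q) := by simpa using hf.hasFDerivAt
  exact hf'.comp_hasDerivAt 0 hline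

theorem im_eq_zero_of_eventually_im_eq_zero {g : ℝ → ℂ} {g' : ℂ} {t : ℝ} (hg : HasDerivAt g g' t)
    (h0 : ∀ᶠ u in nhds t, (g u).im = 0) : g'.im = 0 :=
  (Complex.imCLM.hasFDerivAt.comp_hasDerivAt t hg).unique
    ((hasDerivAt_const t (0 : ℝ)).congr_of_eventuallyEq h0)

theorem mem_complexNhd_of_real {x : RPhase d} (hr : 0 ≤ r) (hI : I ∈ K)
    (hx : dist x.1 I ≤ σ) : (cx d x.1, cx d x.2) ∈ complexNhd K σ r :=
  ⟨⟨I, hI, by rwa [dist_cx]⟩, fun i ↦ by simpa using hr⟩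

namespace IsPerturbation

theorem im_fderiv_eq_zero (hs : IsPerturbation s K σ r M) (hr : 0 ≤ r) (hI : I ∈ K)
    {x : RPhase d} (hx : dist x.1 I < σ) (q : RPhase d) :
    (fderiv ℂ s (cx d x.1, cx d x.2) (cx d q.1, cx d q.2)).im = 0 := by
  have hd := (hs.analyticOnNhd _ (mem_complexNhd_of_real hr hI hx.le)).differentiableAt
  have hderiv := (hasDerivAt_comp_add_smul hd (cx d q.1, cx d q.2)).comp_ofReal (z := 0)
  refine im_eq_zero_of_eventually_im_eq_zero hderiv ?_
  have hcont : ContinuousAt (fun t : ℝ ↦ dist (x.1 + t • q.1) I) 0 := by fun_prop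
  filter_upwards [hcont.eventually_lt_const (by simpa using hx)] with t ht
  have hline : ((cx d x.1, cx d x.2) : CPhase d) + (t : ℂ) • (cx d q.1, cx d q.2) =
      (cx d (x + t • q).1, cx d (x + t • q).2) := by
    ext <;> simp
  rw [hline]
  exact hs.im_eq_zero _ (mem_complexNhd_of_real hr hI ht.le)

theorem gradAction_eq_ofReal_re (hs : IsPerturbation s K σ r M) (hr : 0 ≤ r) (hI : I ∈ K)
    {x : RPhase d} (hx : dist x.1 I < σ) (i : Fin d) :
    gradAction s (cx d x.1, cx d x.2) i = (gradAction s (cx d x.1, cx d x.2) i).re := by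
  have him := hs.im_fderiv_eq_zero hr hI hx (Pi.single i 1, 0)
  rw [cx_single, show cx d 0 = 0 by ext; simp] at him
  exact Complex.ext rfl him

theorem gradAngle_eq_ofReal_re (hs : IsPerturbation s K σ r M) (hr : 0 ≤ r) (hI : I ∈ K)
    {x : RPhase d} (hx : dist x.1 I < σ) (i : Fin d) :
    gradAngle s (cx d x.1, cx d x.2) i = (gradAngle s (cx d x.1, cx d x.2) i).re := by
  have him := hs.im_fderiv_eq_zero hr hI hx (0, Pi.single i 1)
  rw [cx_single, show cx d 0 = 0 by ext; simp] at him
  exact Complex.ext rfl him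

-- Only angle slices of the domain are used, so that actions on its boundary are allowed.
theorem norm_gradAngle_le (hs : IsPerturbation s K σ r M) (hr : 0 < r) (hI : I ∈ K)
    {x : RPhase d} (hx : dist x.1 I ≤ σ) :
    ‖gradAngle s (cx d x.1, cx d x.2)‖ ≤ 2 * M / r := by
  have hp := mem_complexNhd_of_real hr.le hI hx
  have hM : 0 ≤ M := (norm_nonneg _).trans (hs.norm_le _ hp)
  refine (pi_norm_le_iff_of_nonneg (by positivity)).mpr fun i ↦ ?_
  set q : CPhase d := (0, Pi.single i 1)
  have hmem : ∀ t ∈ ball (0 : ℂ) r, ((cx d x.1, cx d x.2) : CPhase d) + t • q ∈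
      complexNhd K σ r := by
    intro t ht
    refine ⟨⟨I, hI, by simpa [q, dist_cx] using hx⟩, fun j ↦ ?_⟩
    have htr : |t.im| ≤ r := (Complex.abs_im_le_norm t).trans (mem_ball_zero_iff.mp ht).le
    by_cases hj : j = i
    · simpa [q, hj] using htr
    · simpa [q, hj] using hr.le
  have hdiff : DifferentiableOn ℂ (fun t : ℂ ↦ s ((cx d x.1, cx d x.2) + t • q)) (ball 0 r) :=
    hs.analyticOnNhd.differentiableOn.comp (by fun_prop) hmem
  have hCauchy := norm_fderiv_le_of_norm_le_on_ball hr hdiff fun t ht ↦ hs.norm_le _ (hmem t ht)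
  have hderiv := hasDerivAt_comp_add_smul (hs.analyticOnNhd _ hp).differentiableAt q
  rwa [← norm_deriv_eq_norm_fderiv, hderiv.deriv] at hCauchy

end IsPerturbation

theorem IsStep.norm_action_sub_le {ω : (Fin d → ℝ) → Fin d → ℝ} {x x' : RPhase d}
    (hstep : IsStep ω s ε x x') (hs : IsPerturbation s K σ r M) (hr : 0 < r) (hε : 0 ≤ ε)
    (hI : I ∈ K) (hx' : dist x'.1 I ≤ σ) : ‖x'.1 - x.1‖ ≤ ε * (2 * M / r) := by
  have hgrad := hs.norm_gradAngle_le (x := (x'.1, x.2)) hr hI hx'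
  refine (pi_norm_le_iff_of_nonneg
    (mul_nonneg hε ((norm_nonneg _).trans hgrad))).mpr fun i ↦ ?_
  rw [Pi.sub_apply, hstep.action i, sub_sub_cancel_left, norm_neg, norm_mul,
    Real.norm_of_nonneg hε]
  gcongr
  exact ((Complex.abs_re_le_norm _).trans (norm_le_pi_norm _ i)).trans hgrad

end Real

section Scaling

/-- Undoes the scaling: actions are rescaled by `ρ` about `I`, and angles are moved forward by `k`
steps of the linear flow with frequency `w`. -/
noncomputable def scaleMap {d : ℕ} (I w : Fin d → ℝ) (ρ : ℝ) (k : ℕ) (x : CPhase d) : CPhase d :=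
  (cx d I + (ρ : ℂ) • x.1, x.2 + cx d ((k : ℝ) • w))

/-- The scaled complex coordinates of the real point `x` at time `k`; see
`scaleMap_scaledPoint`. -/
noncomputable def scaledPoint {d : ℕ} (I w : Fin d → ℝ) (ρ : ℝ) (k : ℕ) (x : RPhase d) :
    CPhase d :=
  (cx d (ρ⁻¹ • (x.1 - I)), cx d (x.2 - (k : ℝ) • w))

/-- The Hamiltonian `Hc` in scaled actions about `I`, without its constant and linear terms. -/
noncomputable def scaledHamiltonian {d : ℕ} (Hc : (Fin d → ℂ) → ℂ) (I w : Fin d → ℝ) (ρ : ℝ)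
    (J : Fin d → ℂ) : ℂ :=
  (Hc (cx d I + (ρ : ℂ) • J) - Hc (cx d I) - cx d w ⬝ᵥ ((ρ : ℂ) • J)) / ρ

/-- The generating function of the `k`-th step in the scaled coordinates: it is `ρ⁻¹` times
`Hc + ε s`, up to terms compensated by the linear flow. -/
noncomputable def scaledGenFun {d : ℕ} (Hc : (Fin d → ℂ) → ℂ) (s : CPhase d → ℂ) (ε : ℝ)
    (I w : Fin d → ℝ) (ρ : ℝ) (k : ℕ) (x : CPhase d) : ℂ :=
  scaledHamiltonian Hc I w ρ x.1 + (ε / ρ : ℝ) * s (scaleMap I w ρ k x)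

variable {d : ℕ} {s : CPhase d → ℂ} {K : Set (Fin d → ℝ)} {σ r M ε ρ l Λ e : ℝ}
  {I w : Fin d → ℝ} {k : ℕ} {h : (Fin d → ℝ) → ℝ} {ω : (Fin d → ℝ) → Fin d → ℝ}
  {Hc : (Fin d → ℂ) → ℂ}

theorem scaleMap_scaledPoint (hρ : ρ ≠ 0) (I w : Fin d → ℝ) (k : ℕ) (x : RPhase d) :
    scaleMap I w ρ k (scaledPoint I w ρ k x) = (cx d x.1, cx d x.2) := by
  have hρ' : (ρ : ℂ) ≠ 0 := Complex.ofReal_ne_zero.mpr hρ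
  ext i
  · simp only [scaleMap, scaledPoint, Pi.add_apply, Pi.smul_apply, cx_apply, smul_eq_mul,
      Pi.sub_apply]
    push_cast
    rw [mul_inv_cancel_left₀ hρ', add_sub_cancel]
  · simp [scaleMap, scaledPoint]

theorem norm_scaledPoint_fst (hρ : 0 < ρ) (I w : Fin d → ℝ) (k : ℕ) (x : RPhase d) :
    ‖(scaledPoint I w ρ k x).1‖ = ‖x.1 - I‖ / ρ := by
  rw [scaledPoint, norm_cx, norm_smul, norm_inv, Real.norm_of_nonneg hρ.le, inv_mul_eq_div]

theorem scaledPoint_mem_phaseStrip {a b : ℝ} {x : RPhase d} (hρ : 0 < ρ) (hb : 0 < b)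
    (hx : ‖x.1 - I‖ < a * ρ) : scaledPoint I w ρ k x ∈ phaseStrip d a b :=
  ⟨by rwa [norm_scaledPoint_fst hρ, div_lt_iff₀ hρ], fun i ↦ by simpa [scaledPoint] using hb⟩

theorem norm_ofReal_smul {E : Type*} [NormedAddCommGroup E] [NormedSpace ℂ E] (hρ : 0 ≤ ρ)
    (z : E) : ‖(ρ : ℂ) • z‖ = ρ * ‖z‖ := by
  rw [norm_smul, Complex.norm_of_nonneg hρ]

theorem hasFDerivAt_scaleMap (I w : Fin d → ℝ) (ρ : ℝ) (k : ℕ) (x : CPhase d) :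
    HasFDerivAt (scaleMap I w ρ k)
      (((ρ : ℂ) • ContinuousLinearMap.fst ℂ _ _).prod (.snd ℂ _ _)) x :=
  ((hasFDerivAt_fst.const_smul (ρ : ℂ)).const_add _).prodMk (hasFDerivAt_snd.add_const _)

theorem scaleMap_mem_complexNhd (hρ : 0 ≤ ρ) (hI : I ∈ K) (h3 : 3 * ρ ≤ σ) {x : CPhase d}
    (hx : x ∈ phaseStrip d 3 r) : scaleMap I w ρ k x ∈ complexNhd K σ r := by
  refine ⟨⟨I, hI, ?_⟩, fun i ↦ ?_⟩
  · rw [scaleMap, dist_eq_norm, add_sub_cancel_left, norm_ofReal_smul hρ]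
    linarith [mul_le_mul_of_nonneg_left hx.1.le hρ]
  · simpa [scaleMap] using (hx.2 i).le

theorem add_smul_mem_ball (hρ : 0 < ρ) (h3 : 3 * ρ ≤ l) {J : Fin d → ℂ} (hJ : ‖J‖ < 3) :
    cx d I + (ρ : ℂ) • J ∈ ball (cx d I) l := by
  rw [mem_ball, dist_eq_norm, add_sub_cancel_left, norm_ofReal_smul hρ.le]
  linarith [mul_lt_mul_of_pos_left hJ hρ]

theorem hasFDerivAt_scaledHamiltonian (hρ : ρ ≠ 0) {J : Fin d → ℂ}
    (hHc : DifferentiableAt ℂ Hc (cx d I + (ρ : ℂ) • J)) :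
    HasFDerivAt (scaledHamiltonian Hc I w ρ)
      (fderiv ℂ Hc (cx d I + (ρ : ℂ) • J) - ∑ i, cx d w i • ContinuousLinearMap.proj i) J := by
  have hρ' : (ρ : ℂ) ≠ 0 := Complex.ofReal_ne_zero.mpr hρ
  have hscale : HasFDerivAt (fun J : Fin d → ℂ ↦ (ρ : ℂ) • J) ((ρ : ℂ) • .id ℂ _) J :=
    (hasFDerivAt_id J).const_smul (ρ : ℂ)
  have hdot : HasFDerivAt (fun J : Fin d → ℂ ↦ cx d w ⬝ᵥ ((ρ : ℂ) • J))
      ((∑ i, cx d w i • ContinuousLinearMap.proj i).comp ((ρ : ℂ) • .id ℂ _)) J := by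
    refine (ContinuousLinearMap.hasFDerivAt _).congr_of_eventuallyEq (.of_forall fun _ ↦ ?_)
    simp [dotProduct, Finset.mul_sum, mul_left_comm]
  refine ((((hHc.hasFDerivAt.comp J (hscale.const_add _)).sub_const _).sub hdot).mul_const
    (ρ : ℂ)⁻¹).congr_fderiv ?_
  ext v
  simp [← mul_sub, hρ']

theorem differentiableOn_scaledHamiltonian (hρ : 0 < ρ) (h3 : 3 * ρ ≤ l)
    (hHc : DifferentiableOn ℂ Hc (ball (cx d I) l)) :
    DifferentiableOn ℂ (scaledHamiltonian Hc I w ρ) (ball 0 3) := fun _ hJ ↦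
  (hasFDerivAt_scaledHamiltonian hρ.ne' (hHc.differentiableAt (isOpen_ball.mem_nhds
    (add_smul_mem_ball hρ h3 (mem_ball_zero_iff.mp hJ))))).differentiableAt.differentiableWithinAt

theorem norm_scaledHamiltonian_le (hHc : IsLocalComplexification h ω Hc I l Λ) (hρ : 0 < ρ)
    {J : Fin d → ℂ} (hJ : ρ * ‖J‖ < l) :
    ‖scaledHamiltonian Hc I (ω I) ρ J‖ ≤ Λ * ρ * ‖J‖ ^ 2 := by
  have hl : 0 < l := (by positivity : 0 ≤ ρ * ‖J‖).trans_lt hJ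
  have hrem := hHc.norm_remainder_le ((ρ : ℂ) • J) (by rwa [norm_ofReal_smul hρ.le])
  rw [norm_ofReal_smul hρ.le, ← hHc.apply_cx I (mem_ball_self hl)] at hrem
  rw [scaledHamiltonian, norm_div, Complex.norm_of_nonneg hρ.le, div_le_iff₀ hρ]
  exact hrem.trans_eq (by ring)

theorem norm_scaledHamiltonian_le_nine_mul (hHc : IsLocalComplexification h ω Hc I l Λ)
    (hΛ : 0 ≤ Λ) (hρ : 0 < ρ) (h3 : 3 * ρ ≤ l) {J : Fin d → ℂ} (hJ : ‖J‖ < 3) :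
    ‖scaledHamiltonian Hc I (ω I) ρ J‖ ≤ 9 * Λ * ρ := by
  calc ‖scaledHamiltonian Hc I (ω I) ρ J‖ ≤ Λ * ρ * ‖J‖ ^ 2 :=
        norm_scaledHamiltonian_le hHc hρ (by linarith [mul_lt_mul_of_pos_left hJ hρ])
    _ ≤ Λ * ρ * 3 ^ 2 := by gcongr
    _ = 9 * Λ * ρ := by ring

theorem norm_scaledHamiltonian_sub_le (hHc : IsLocalComplexification h ω Hc I l Λ)
    (hΛ : 0 ≤ Λ) (hρ : 0 < ρ) (h3 : 3 * ρ ≤ l) (he : 0 < e) {J J' : Fin d → ℂ}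
    (hJ : ‖J‖ < 3 - e) (hJ' : ‖J'‖ < 3 - e) :
    ‖scaledHamiltonian Hc I (ω I) ρ J' - scaledHamiltonian Hc I (ω I) ρ J‖ ≤
      2 * (9 * Λ * ρ) / e * ‖J' - J‖ := by
  have hdiff := differentiableOn_scaledHamiltonian (w := ω I) hρ h3
    hHc.analyticOnNhd.differentiableOn
  refine (convex_ball (0 : Fin d → ℂ) (3 - e)).norm_image_sub_le_of_norm_fderiv_le (𝕜 := ℂ)
    (fun z hz ↦ ?_) (fun z hz ↦ ?_) (mem_ball_zero_iff.mpr hJ) (mem_ball_zero_iff.mpr hJ')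
  · exact hdiff.differentiableAt
      (isOpen_ball.mem_nhds (ball_subset_ball (sub_le_self _ he.le) hz))
  · have hsub : ball z e ⊆ ball 0 3 := ball_subset_ball' (by linarith [mem_ball.mp hz])
    exact norm_fderiv_le_of_norm_le_on_ball he (hdiff.mono hsub) fun y hy ↦
      norm_scaledHamiltonian_le_nine_mul hHc hΛ hρ h3 (mem_ball_zero_iff.mp (hsub hy))

theorem half_mul_norm_sq_le_norm_scaledHamiltonian {ν : ℝ} {U : Set (Fin d → ℝ)}
    (hHc : IsLocalComplexification h ω Hc I l Λ) (hω : IsFrequencyMapOn h ω U) (hν : 0 < ν)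
    (hconv : IsStronglyMonotoneOn ν ω U) (hU : ball I l ⊆ U) (hρ : 0 < ρ)
    {u : Fin d → ℝ} (hu : ρ * ‖u‖ < l) :
    ν / 2 * ρ * ‖u‖ ^ 2 ≤ ‖scaledHamiltonian Hc I (ω I) ρ (cx d u)‖ := by
  have hball : ∀ t ∈ Icc (0 : ℝ) 1, I + t • ρ • u ∈ ball I l := by
    intro t ht
    rw [mem_ball, dist_eq_norm, add_sub_cancel_left, norm_smul, norm_smul,
      Real.norm_of_nonneg ht.1, Real.norm_of_nonneg hρ.le]
    exact (mul_le_of_le_one_left (by positivity) ht.2).trans_lt hu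
  have hl : 0 < l := (by positivity : 0 ≤ ρ * ‖u‖).trans_lt hu
  have hmain := hω.half_mul_sum_sq_le hν hconv fun t ht ↦ hU (hball t ht)
  have hone : I + ρ • u ∈ ball I l := by simpa using hball 1 ⟨zero_le_one, le_rfl⟩
  have hreal : scaledHamiltonian Hc I (ω I) ρ (cx d u) =
      ((h (I + ρ • u) - h I - ω I ⬝ᵥ (ρ • u)) / ρ : ℝ) := by
    have hsmul : (ρ : ℂ) • cx d u = cx d (ρ • u) := by ext; simp
    rw [scaledHamiltonian, hsmul, ← cx_add, hHc.apply_cx _ hone,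
      hHc.apply_cx I (mem_ball_self hl), cx_dotProduct]
    push_cast
    rfl
  have hsq : ‖u‖ ^ 2 ≤ ∑ i, u i ^ 2 := by
    rw [← Real.le_sqrt (norm_nonneg u) (by positivity)]
    refine (pi_norm_le_iff_of_nonneg (Real.sqrt_nonneg _)).mpr fun i ↦ ?_
    rw [Real.norm_eq_abs, ← Real.sqrt_sq_eq_abs]
    exact Real.sqrt_le_sqrt (Finset.single_le_sum (fun i _ ↦ sq_nonneg (u i)) (Finset.mem_univ i))
  rw [hreal, Complex.norm_real]
  refine le_trans ?_ (le_abs_self _)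
  rw [le_div_iff₀ hρ]
  calc ν / 2 * ρ * ‖u‖ ^ 2 * ρ ≤ ν / 2 * ρ * (∑ i, u i ^ 2) * ρ := by gcongr
    _ = ν / 2 * ∑ i, (ρ • u) i ^ 2 := by
        simp only [Pi.smul_apply, smul_eq_mul, mul_pow, ← Finset.mul_sum]
        ring
    _ ≤ _ := hmain

theorem norm_scaledGenFun_sub_le (hs : IsPerturbation s K σ r M) (hI : I ∈ K) (hε : 0 ≤ ε)
    (hρ : 0 < ρ) (h3 : 3 * ρ ≤ σ) {x : CPhase d} (hx : x ∈ phaseStrip d 3 r) :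
    ‖scaledGenFun Hc s ε I w ρ k x - scaledHamiltonian Hc I w ρ x.1‖ ≤ ε / ρ * M := by
  rw [scaledGenFun, add_sub_cancel_left, norm_mul, Complex.norm_of_nonneg (by positivity)]
  gcongr
  exact hs.norm_le _ (scaleMap_mem_complexNhd hρ.le hI h3 hx)

theorem norm_scaledGenFun_le (hHc : IsLocalComplexification h ω Hc I l Λ) (hΛ : 0 ≤ Λ)
    (hs : IsPerturbation s K σ r M) (hI : I ∈ K) (hε : 0 ≤ ε) (hερ : ε ≤ ρ ^ 2) (hρ : 0 < ρ)
    (h3l : 3 * ρ ≤ l) (h3 : 3 * ρ ≤ σ) {x : CPhase d} (hx : x ∈ phaseStrip d 3 r) :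
    ‖scaledGenFun Hc s ε I (ω I) ρ k x‖ ≤ (9 * Λ + M) * ρ := by
  have hM : 0 ≤ M :=
    (norm_nonneg _).trans (hs.norm_le _ (scaleMap_mem_complexNhd (w := 0) (k := 0) hρ.le hI h3 hx))
  have hερ' : ε / ρ * M ≤ ρ * M := by
    gcongr
    rwa [div_le_iff₀ hρ, ← sq]
  calc ‖scaledGenFun Hc s ε I (ω I) ρ k x‖
      ≤ ‖scaledGenFun Hc s ε I (ω I) ρ k x - scaledHamiltonian Hc I (ω I) ρ x.1‖ +
        ‖scaledHamiltonian Hc I (ω I) ρ x.1‖ := by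
        simpa using norm_add_le (scaledGenFun Hc s ε I (ω I) ρ k x -
          scaledHamiltonian Hc I (ω I) ρ x.1) (scaledHamiltonian Hc I (ω I) ρ x.1)
    _ ≤ ρ * M + 9 * Λ * ρ := add_le_add
        ((norm_scaledGenFun_sub_le hs hI hε hρ h3 hx).trans hερ')
        (norm_scaledHamiltonian_le_nine_mul hHc hΛ hρ h3l hx.1)
    _ = (9 * Λ + M) * ρ := by ring

theorem fderiv_scaledGenFun_apply (hρ : ρ ≠ 0) {x : CPhase d}
    (hHc : DifferentiableAt ℂ Hc (cx d I + (ρ : ℂ) • x.1))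
    (hs : DifferentiableAt ℂ s (scaleMap I w ρ k x)) (v : CPhase d) :
    fderiv ℂ (scaledGenFun Hc s ε I w ρ k) x v =
      fderiv ℂ Hc (cx d I + (ρ : ℂ) • x.1) v.1 - cx d w ⬝ᵥ v.1 +
        (ε / ρ : ℝ) * fderiv ℂ s (scaleMap I w ρ k x) ((ρ : ℂ) • v.1, v.2) := by
  have hderiv := ((hasFDerivAt_scaledHamiltonian (w := w) hρ hHc).comp x hasFDerivAt_fst).add
    ((hs.hasFDerivAt.comp x (hasFDerivAt_scaleMap I w ρ k x)).const_mul ((ε / ρ : ℝ) : ℂ))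
  refine (congrArg (· v) hderiv.fderiv).trans ?_
  simp [dotProduct]

theorem analyticOnNhd_scaledGenFun (hHc : AnalyticOnNhd ℂ Hc (ball (cx d I) l))
    (hs : AnalyticOnNhd ℂ s (complexNhd K σ r)) (hI : I ∈ K) (hρ : 0 < ρ) (h3l : 3 * ρ ≤ l)
    (h3 : 3 * ρ ≤ σ) : AnalyticOnNhd ℂ (scaledGenFun Hc s ε I w ρ k) (phaseStrip d 3 r) := by
  intro x hx
  have hscale : AnalyticAt ℂ (fun x : CPhase d ↦ (ρ : ℂ) • x.1) x :=
    analyticAt_const.fun_smul analyticAt_fst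
  have hmap : AnalyticAt ℂ (scaleMap I w ρ k) x :=
    (analyticAt_const.fun_add hscale).prod (analyticAt_snd.fun_add analyticAt_const)
  have hdot : AnalyticAt ℂ (fun x : CPhase d ↦ cx d w ⬝ᵥ ((ρ : ℂ) • x.1)) x :=
    Finset.analyticAt_fun_sum _ fun i _ ↦ analyticAt_const.fun_mul
      ((ContinuousLinearMap.proj (R := ℂ) i).analyticAt _ |>.fun_comp hscale)
  have hHc' : AnalyticAt ℂ (fun x : CPhase d ↦ Hc (cx d I + (ρ : ℂ) • x.1)) x :=
    AnalyticAt.fun_comp (f := fun x : CPhase d ↦ cx d I + (ρ : ℂ) • x.1)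
      (hHc _ (add_smul_mem_ball hρ h3l hx.1)) (analyticAt_const.fun_add hscale)
  exact ((hHc'.fun_sub analyticAt_const).fun_sub hdot).div_const.fun_add
    (analyticAt_const.fun_mul ((hs _ (scaleMap_mem_complexNhd hρ.le hI h3 hx)).fun_comp hmap))

theorem fderiv_scaledGenFun_scaledPoint (hHc : IsLocalComplexification h ω Hc I l Λ)
    (hs : IsPerturbation s K σ r M) (hr : 0 ≤ r) (hI : I ∈ K) (hρ : ρ ≠ 0) {x : RPhase d}
    (hxl : dist x.1 I < l) (hxσ : dist x.1 I ≤ σ) (v : CPhase d) :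
    fderiv ℂ (scaledGenFun Hc s ε I (ω I) ρ k) (scaledPoint I (ω I) ρ k x) v =
      cx d (ω x.1) ⬝ᵥ v.1 - cx d (ω I) ⬝ᵥ v.1 +
        (ε / ρ : ℝ) * fderiv ℂ s (cx d x.1, cx d x.2) ((ρ : ℂ) • v.1, v.2) := by
  have hx : scaleMap I (ω I) ρ k (scaledPoint I (ω I) ρ k x) = (cx d x.1, cx d x.2) :=
    scaleMap_scaledPoint hρ _ _ _ _
  have hx1 : cx d I + (ρ : ℂ) • (scaledPoint I (ω I) ρ k x).1 = cx d x.1 := congrArg Prod.fst hx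
  rw [fderiv_scaledGenFun_apply hρ ?_ ?_ v, hx1, hx, hHc.fderiv_cx _ hxl]
  · rw [hx1]
    exact (hHc.analyticOnNhd _ (by rwa [mem_ball, dist_cx])).differentiableAt
  · rw [hx]
    exact (hs.analyticOnNhd _ (mem_complexNhd_of_real hr hI hxσ)).differentiableAt

theorem gradAngle_scaledGenFun_scaledPoint (hHc : IsLocalComplexification h ω Hc I l Λ)
    (hs : IsPerturbation s K σ r M) (hr : 0 ≤ r) (hI : I ∈ K) (hρ : ρ ≠ 0) {x : RPhase d}
    (hxl : dist x.1 I < l) (hxσ : dist x.1 I < σ) (i : Fin d) :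
    gradAngle (scaledGenFun Hc s ε I (ω I) ρ k) (scaledPoint I (ω I) ρ k x) i =
      (ε / ρ : ℝ) * (gradAngle s (cx d x.1, cx d x.2) i).re := by
  rw [← hs.gradAngle_eq_ofReal_re hr hI hxσ]
  simp [gradAngle, fderiv_scaledGenFun_scaledPoint hHc hs hr hI hρ hxl hxσ.le]

theorem gradAction_scaledGenFun_scaledPoint (hHc : IsLocalComplexification h ω Hc I l Λ)
    (hs : IsPerturbation s K σ r M) (hr : 0 ≤ r) (hI : I ∈ K) (hρ : ρ ≠ 0) {x : RPhase d}
    (hxl : dist x.1 I < l) (hxσ : dist x.1 I < σ) (i : Fin d) :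
    gradAction (scaledGenFun Hc s ε I (ω I) ρ k) (scaledPoint I (ω I) ρ k x) i =
      ω x.1 i - ω I i + ε * (gradAction s (cx d x.1, cx d x.2) i).re := by
  have hρ' : (ρ : ℂ) ≠ 0 := Complex.ofReal_ne_zero.mpr hρ
  have hsmul : ((ρ : ℂ) • (Pi.single i 1 : Fin d → ℂ), (0 : Fin d → ℂ)) =
      (ρ : ℂ) • ((Pi.single i 1, 0) : CPhase d) := by simp
  rw [← hs.gradAction_eq_ofReal_re hr hI hxσ]
  simp only [gradAction, fderiv_scaledGenFun_scaledPoint hHc hs hr hI hρ hxl hxσ.le, hsmul,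
    map_smul, dotProduct_single_one, cx_apply, smul_eq_mul]
  push_cast
  field_simp

-- The point of mixed coordinates `(x'.1, x.2)` of a step is real, so both gradients are real there.
theorem IsStep.scaledPoint_eq {x x' : RPhase d} (hstep : IsStep ω s ε x x')
    (hHc : IsLocalComplexification h ω Hc I l Λ) (hs : IsPerturbation s K σ r M) (hr : 0 ≤ r)
    (hI : I ∈ K) (hρ : ρ ≠ 0) (hx'l : dist x'.1 I < l) (hx'σ : dist x'.1 I < σ) :
    let χ := scaledGenFun Hc s ε I (ω I) ρ k
    let y := scaledPoint I (ω I) ρ k (x'.1, x.2)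
    scaledPoint I (ω I) ρ k x = (y.1 + gradAngle χ y, y.2) ∧
      scaledPoint I (ω I) ρ (k + 1) x' = (y.1, y.2 + gradAction χ y) := by
  intro χ y
  have hρ' : (ρ : ℂ) ≠ 0 := Complex.ofReal_ne_zero.mpr hρ
  constructor
  · refine Prod.ext (funext fun i ↦ ?_) rfl
    have hgrad : gradAngle χ y i = (ε / ρ : ℝ) * (gradAngle s (cx d x'.1, cx d x.2) i).re :=
      gradAngle_scaledGenFun_scaledPoint (x := (x'.1, x.2)) hHc hs hr hI hρ hx'l hx'σ i
    change _ = y.1 i + gradAngle χ y i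
    rw [hgrad]
    simp only [y, scaledPoint, cx_apply, Pi.smul_apply, Pi.sub_apply, smul_eq_mul, hstep.action i]
    push_cast
    field_simp
    ring
  · refine Prod.ext rfl (funext fun i ↦ ?_)
    have hgrad : gradAction χ y i =
        ω x'.1 i - ω I i + ε * (gradAction s (cx d x'.1, cx d x.2) i).re :=
      gradAction_scaledGenFun_scaledPoint (x := (x'.1, x.2)) hHc hs hr hI hρ hx'l hx'σ i
    change _ = y.2 i + gradAction χ y i
    rw [hgrad]
    simp only [y, scaledPoint, cx_apply, Pi.smul_apply, Pi.sub_apply, smul_eq_mul, hstep.angle i]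
    push_cast
    ring

end Scaling

/-! ### Blocks of `n` iterates near a resonant torus -/

/-- `F` is the lift to `ℝ^d × ℝ^d` of the map of `K × 𝕋^d` generated by `Ī · φ + h Ī + ε s (Ī, φ)`,
where `ω` is the gradient of `h`; it sends actions `σ / 2`-close to `K` to actions `σ`-close to
`K`. -/
structure IsNearIntegrableMap {d : ℕ} (F : RPhase d → RPhase d) (ω : (Fin d → ℝ) → Fin d → ℝ)
    (s : CPhase d → ℂ) (K : Set (Fin d → ℝ)) (σ ε : ℝ) : Prop where
  exists_dist_le : ∀ x : RPhase d, (∃ y ∈ K, dist x.1 y ≤ σ / 2) → ∃ y ∈ K, dist (F x).1 y ≤ σ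
  isStep : ∀ x : RPhase d, (∃ y ∈ K, dist x.1 y ≤ σ / 2) → IsStep ω s ε x (F x)
  map_add_intCast : ∀ (x : RPhase d) (q : Fin d → ℤ),
    F (x.1, x.2 + fun i ↦ (q i : ℝ)) = ((F x).1, (F x).2 + fun i ↦ (q i : ℝ))

/-- In the coordinates scaled by `ρ` about `I`, the map `G` is a contact lift of `F^[n]` which is
`δ`-close to the identity, with energy `n H` up to an error `η`. -/
structure IsBlockLift {d : ℕ} (G : ExtPhase d → ExtPhase d) (F : RPhase d → RPhase d) (n : ℕ)
    (I w : Fin d → ℝ) (ρ : ℝ) (H : (Fin d → ℂ) → ℂ) (U : Set (ExtPhase d)) (δ η : ℝ) : Prop where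
  isNearIdContactOn : IsNearIdContactOn G U δ
  norm_contactForm_sub_le : ∀ v ∈ U, ‖contactForm v (G v - v) - n * H v.1.1‖ ≤ η
  map_scaledPoint : ∀ x : RPhase d, ‖x.1 - I‖ ≤ ρ / 2 → ∀ α,
    (G (scaledPoint I w ρ 0 x, α)).1 = scaledPoint I w ρ n (F^[n] x)
  norm_iterate_sub_le : ∀ x : RPhase d, ‖x.1 - I‖ ≤ ρ / 2 → ∀ k ≤ n,
    ‖(F^[k] x).1 - I‖ ≤ 3 / 4 * ρ

/-- The constant `D` such that a step in the coordinates scaled by `ρ` is `D ρ`-close to the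
identity. -/
noncomputable def stepConst (d : ℕ) (e Λ M : ℝ) : ℝ := (2 / e * (1 + d * 3) + 1) * (9 * Λ + M)

section Block

variable {d n : ℕ} {s : CPhase d → ℂ} {K : Set (Fin d → ℝ)} {σ r M ε ρ l Λ e : ℝ}
  {I w : Fin d → ℝ} {h : (Fin d → ℝ) → ℝ} {ω : (Fin d → ℝ) → Fin d → ℝ}
  {Hc : (Fin d → ℂ) → ℂ} {F : RPhase d → RPhase d}

theorem IsNearIntegrableMap.norm_map_sub_le (hF : IsNearIntegrableMap F ω s K σ ε)
    (hs : IsPerturbation s K σ r M) (hr : 0 < r) (hε : 0 ≤ ε) (hερ : ε * (2 * M / r) ≤ ρ)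
    (hI : I ∈ K) (h3 : 3 * ρ ≤ σ) (hρ : 0 ≤ ρ) {x : RPhase d} (hx : ‖x.1 - I‖ ≤ ρ) :
    ‖(F x).1 - I‖ ≤ 2 * ρ := by
  have hxK : ∃ y ∈ K, dist x.1 y ≤ σ / 2 := ⟨I, hI, by rw [dist_eq_norm]; linarith⟩
  obtain ⟨y, hy, hFy⟩ := hF.exists_dist_le x hxK
  have hmove := (hF.isStep x hxK).norm_action_sub_le hs hr hε hy hFy
  calc ‖(F x).1 - I‖ = ‖((F x).1 - x.1) + (x.1 - I)‖ := by rw [sub_add_sub_cancel]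
    _ ≤ ρ + ρ := norm_add_le_of_le (hmove.trans hερ) hx
    _ = 2 * ρ := (two_mul ρ).symm

theorem exists_stepLift (hHc : IsLocalComplexification h ω Hc I l Λ)
    (hs : IsPerturbation s K σ r M) (hF : IsNearIntegrableMap F ω s K σ ε) (hI : I ∈ K)
    (hΛ : 0 ≤ Λ) (hr : 0 < r) (hε : 0 ≤ ε) (hερ : ε ≤ ρ ^ 2) (hερ' : ε * (2 * M / r) ≤ ρ)
    (hρ : 0 < ρ) (h3l : 3 * ρ ≤ l) (h3 : 3 * ρ ≤ σ) (he : 0 < e) (he1 : 8 * e ≤ 1)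
    (her : 8 * e ≤ r) (hμ : 8 * ((9 * Λ + M) * ρ) ≤ e ^ 2) (k : ℕ) :
    ∃ G, IsNearIdContactOn G (extStrip d (3 - 3 * e) (r - 3 * e)) (stepConst d e Λ M * ρ) ∧
      HasGeneratingRelation (scaledGenFun Hc s ε I (ω I) ρ k) G
        (extStrip d (3 - 3 * e) (r - 3 * e)) ∧
      ∀ x : RPhase d, ‖x.1 - I‖ ≤ ρ → ∀ α,
        (G (scaledPoint I (ω I) ρ k x, α)).1 = scaledPoint I (ω I) ρ (k + 1) (F x) := by
  obtain ⟨G, hG, hGχ, hGy⟩ := exists_isNearIdContactOn_of_generatingFunction he hμ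
    (analyticOnNhd_scaledGenFun hHc.analyticOnNhd hs.analyticOnNhd hI hρ h3l h3)
    fun _ ↦ norm_scaledGenFun_le (k := k) hHc hΛ hs hI hε hερ hρ h3l h3
  refine ⟨G, by rwa [stepConst, mul_assoc], hGχ, fun x hx α ↦ ?_⟩
  have hFx := hF.norm_map_sub_le hs hr hε hερ' hI h3 hρ.le hx
  have hdist : dist (F x).1 I < 3 * ρ := by
    rw [dist_eq_norm]
    linarith
  have hstep := hF.isStep x ⟨I, hI, by rw [dist_eq_norm]; linarith⟩
  obtain ⟨hx0, hx1⟩ := hstep.scaledPoint_eq (k := k) hHc hs hr.le hI hρ.ne' (hdist.trans_le h3l)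
    (hdist.trans_le h3)
  rw [hx0, hx1]
  have hmix : ‖(F x).1 - I‖ < (3 - 2 * e) * ρ := hFx.trans_lt (by gcongr; linarith)
  exact hGy _ (scaledPoint_mem_phaseStrip (x := ((F x).1, x.2)) hρ (by linarith) hmix) α

theorem seqComp_scaledPoint {G : ℕ → ExtPhase d → ExtPhase d} {x : RPhase d} {α : ℂ} (hρ : 0 < ρ)
    (hG : ∀ k, ∀ x : RPhase d, ‖x.1 - I‖ ≤ ρ → ∀ α,
      (G k (scaledPoint I w ρ k x, α)).1 = scaledPoint I w ρ (k + 1) (F x))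
    (hx : ‖x.1 - I‖ ≤ ρ / 2)
    (hclose : ∀ k ≤ n, ‖seqComp G k (scaledPoint I w ρ 0 x, α) - (scaledPoint I w ρ 0 x, α)‖ ≤
      1 / 4) :
    ∀ k ≤ n, (seqComp G k (scaledPoint I w ρ 0 x, α)).1 = scaledPoint I w ρ k (F^[k] x) ∧
      ‖(F^[k] x).1 - I‖ ≤ 3 / 4 * ρ := by
  set v : ExtPhase d := (scaledPoint I w ρ 0 x, α)
  have hnear : ∀ k ≤ n, (seqComp G k v).1 = scaledPoint I w ρ k (F^[k] x) →
      ‖(F^[k] x).1 - I‖ ≤ 3 / 4 * ρ := by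
    intro k hk hconj
    have hv : ‖v.1.1‖ ≤ 1 / 2 := by
      rw [norm_scaledPoint_fst hρ, div_le_iff₀ hρ]
      linarith
    have hmove : ‖(seqComp G k v).1.1 - v.1.1‖ ≤ 1 / 4 :=
      (norm_fst_le (seqComp G k v - v).1).trans
        ((norm_fst_le (seqComp G k v - v)).trans (hclose k hk))
    rw [← div_le_iff₀ hρ, ← norm_scaledPoint_fst hρ I w k, ← hconj]
    linarith [norm_sub_norm_le (seqComp G k v).1.1 v.1.1]
  suffices hconj : ∀ k ≤ n, (seqComp G k v).1 = scaledPoint I w ρ k (F^[k] x) from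
    fun k hk ↦ ⟨hconj k hk, hnear k hk (hconj k hk)⟩
  intro k
  induction k with
  | zero => exact fun _ ↦ rfl
  | succ k ih =>
    intro hk
    have ihk := ih (by omega)
    have hxk : ‖(F^[k] x).1 - I‖ ≤ ρ := (hnear k (by omega) ihk).trans (by linarith)
    have hGk := hG k _ hxk (seqComp G k v).2
    rw [← ihk] at hGk
    rw [Function.iterate_succ_apply']
    exact hGk

theorem norm_scaledGenFun_sub_scaledHamiltonian_le {k : ℕ} {η : ℝ}
    (hHc : IsLocalComplexification h ω Hc I l Λ)
    (hs : IsPerturbation s K σ r M) (hI : I ∈ K) (hΛ : 0 ≤ Λ) (hε : 0 ≤ ε) (hρ : 0 < ρ)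
    (h3l : 3 * ρ ≤ l) (h3 : 3 * ρ ≤ σ) (he : 0 < e) {x : CPhase d}
    {J : Fin d → ℂ} (hx : x ∈ phaseStrip d (3 - e) r) (hJ : ‖J‖ < 3 - e) (hxJ : ‖x.1 - J‖ ≤ η) :
    ‖scaledGenFun Hc s ε I (ω I) ρ k x - scaledHamiltonian Hc I (ω I) ρ J‖ ≤
      ε / ρ * M + 2 * (9 * Λ * ρ) / e * η := by
  rw [← sub_add_sub_cancel _ (scaledHamiltonian Hc I (ω I) ρ x.1)]
  refine norm_add_le_of_le (norm_scaledGenFun_sub_le hs hI hε hρ h3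
    (phaseStrip_mono (by linarith) le_rfl hx)) ?_
  refine (norm_scaledHamiltonian_sub_le hHc hΛ hρ h3l he hJ hx.1).trans ?_
  gcongr

theorem stepConst_nonneg {Λ M : ℝ} (he : 0 ≤ e) (hΛ : 0 ≤ Λ) (hM : 0 ≤ M) :
    0 ≤ stepConst d e Λ M := by
  rw [stepConst]
  positivity

theorem norm_contactForm_blockMap_sub_le {G : ℕ → ExtPhase d → ExtPhase d} {δ : ℝ} {v : ExtPhase d}
    (hHc : IsLocalComplexification h ω Hc I l Λ) (hs : IsPerturbation s K σ r M) (hI : I ∈ K)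
    (hΛ : 0 ≤ Λ) (hε : 0 ≤ ε) (hρ : 0 < ρ) (h3l : 3 * ρ ≤ l) (h3 : 3 * ρ ≤ σ) (he : 0 < e)
    (hδ : 0 ≤ δ) (hG : ∀ k, IsNearIdContactOn (G k) (extStrip d (3 - 3 * e) (r - 3 * e)) δ)
    (hGχ : ∀ k, HasGeneratingRelation (scaledGenFun Hc s ε I (ω I) ρ k) (G k)
      (extStrip d (3 - 3 * e) (r - 3 * e)))
    (hv : v ∈ extStrip d (3 - 4 * e) (r - 4 * e))
    (hsub : closedBall v (n * δ) ⊆ extStrip d (3 - 3 * e) (r - 3 * e)) :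
    ‖contactForm v (seqComp G n v - v) - n * scaledHamiltonian Hc I (ω I) ρ v.1.1‖ ≤
      n * (d * (n * δ) * δ + (ε / ρ * M + 2 * (9 * Λ * ρ) / e * (n * δ))) :=
  norm_contactForm_seqComp_sub_le hδ (fun k _ u hu ↦ (hG k).norm_sub_le u hu) (fun k _ ↦ hGχ k)
    hsub (fun _ _ _ hx hxv ↦ norm_scaledGenFun_sub_scaledHamiltonian_le hHc hs hI hΛ hε hρ h3l h3 he
      (phaseStrip_mono (by linarith) (by linarith) hx) (hv.1.trans_le (by linarith)) hxv) n le_rfl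

theorem exists_isBlockLift (hHc : IsLocalComplexification h ω Hc I l Λ)
    (hs : IsPerturbation s K σ r M) (hF : IsNearIntegrableMap F ω s K σ ε) (hI : I ∈ K)
    (hΛ : 0 ≤ Λ) (hM : 0 ≤ M) (hr : 0 < r) (hε : 0 ≤ ε) (hερ : ε ≤ ρ ^ 2)
    (hερ' : ε * (2 * M / r) ≤ ρ) (hρ : 0 < ρ) (h3l : 3 * ρ ≤ l) (h3 : 3 * ρ ≤ σ) (he : 0 < e)
    (he1 : 8 * e ≤ 1) (her : 8 * e ≤ r) (hμ : 8 * ((9 * Λ + M) * ρ) ≤ e ^ 2)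
    (hne : stepConst d e Λ M * (n * ρ) ≤ e) :
    ∃ G, IsBlockLift G F n I (ω I) ρ (scaledHamiltonian Hc I (ω I) ρ)
      (extStrip d (3 - 4 * e) (r - 4 * e)) (stepConst d e Λ M * (n * ρ))
      ((d * stepConst d e Λ M ^ 2 + 18 * Λ * stepConst d e Λ M / e) * (n * ρ) ^ 2 +
        n * ρ * (ε / ρ ^ 2 * M)) := by
  choose G hG hGχ hGx using exists_stepLift hHc hs hF hI hΛ hr hε hερ hερ' hρ h3l h3 he he1 her hμ
  have hD := stepConst_nonneg (d := d) he.le hΛ hM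
  generalize stepConst d e Λ M = D at hG hD hne ⊢
  have hδ : 0 ≤ D * ρ := mul_nonneg hD hρ.le
  have hnδ : n * (D * ρ) = D * (n * ρ) := mul_left_comm _ _ _
  have hsub : ∀ v ∈ extStrip d (3 - 4 * e) (r - 4 * e),
      closedBall v (n * (D * ρ)) ⊆ extStrip d (3 - 3 * e) (r - 3 * e) := fun v hv ↦
    closedBall_subset_extStrip (by linarith) (by linarith) hv
  have hcontact : ∀ k ≤ n, IsNearIdContactOn (seqComp G k) (extStrip d (3 - 4 * e) (r - 4 * e))
      (k * (D * ρ)) :=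
    isNearIdContactOn_seqComp (isOpen_extStrip _ _ _) (isOpen_extStrip _ _ _) hδ
      (fun k _ ↦ hG k) hsub
  have hclose (x : RPhase d) (hx : ‖x.1 - I‖ ≤ ρ / 2) (α : ℂ) (k : ℕ) (hk : k ≤ n) :
      ‖seqComp G k (scaledPoint I (ω I) ρ 0 x, α) - (scaledPoint I (ω I) ρ 0 x, α)‖ ≤ 1 / 4 := by
    have hρe : 1 / 2 * ρ < (3 - 4 * e) * ρ := by
      gcongr
      linarith
    have hmem : scaledPoint I (ω I) ρ 0 x ∈ phaseStrip d (3 - 4 * e) (r - 4 * e) :=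
      scaledPoint_mem_phaseStrip hρ (by linarith) (by linarith)
    calc ‖seqComp G k (scaledPoint I (ω I) ρ 0 x, α) - (scaledPoint I (ω I) ρ 0 x, α)‖
        ≤ k * (D * ρ) := (hcontact k hk).norm_sub_le _ hmem
      _ ≤ n * (D * ρ) := by gcongr
      _ ≤ 1 / 4 := by linarith
  have hconj (x : RPhase d) (hx : ‖x.1 - I‖ ≤ ρ / 2) (α : ℂ) :=
    seqComp_scaledPoint hρ hGx hx (hclose x hx α)
  exact ⟨seqComp G n,
    { isNearIdContactOn := hnδ ▸ hcontact n le_rfl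
      norm_contactForm_sub_le v hv := by
        refine (norm_contactForm_blockMap_sub_le hHc hs hI hΛ hε hρ h3l h3 he hδ hG hGχ hv
          (hsub v hv)).trans_eq ?_
        field_simp
        ring
      map_scaledPoint x hx α := (hconj x hx α n le_rfl).1
      norm_iterate_sub_le x hx k hk := (hconj x hx 0 k hk).2 }⟩

end Block

/-! ### Confinement by the approximate energy -/

theorem iterate_mem_of_almostInvariant {X E : Type*} [SeminormedAddCommGroup E] {T : X → X}
    {P Q : Set X} {K L : X → E} {η κ b : ℝ} {N : ℕ} {x : X} (hPQ : P ⊆ Q) (hT : MapsTo T P Q)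
    (hKL : ∀ y ∈ Q, ‖K y - L y‖ ≤ η) (hK : ∀ y ∈ P, ‖K (T y) - K y‖ ≤ κ)
    (hL : ∀ y ∈ Q, ‖L y‖ ≤ b → y ∈ P) (hx : x ∈ P) (hb : ‖L x‖ + 2 * η + N * κ ≤ b) :
    ∀ j ≤ N, T^[j] x ∈ P := by
  have hκ : 0 ≤ κ := (norm_nonneg _).trans (hK x hx)
  suffices hmem : ∀ j ≤ N, T^[j] x ∈ P ∧ ‖K (T^[j] x) - K x‖ ≤ j * κ from fun j hj ↦ (hmem j hj).1
  intro j
  induction j with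
  | zero => exact fun _ ↦ ⟨hx, by simp⟩
  | succ j ih =>
    intro hj
    obtain ⟨hjP, hjK⟩ := ih (by omega)
    rw [Function.iterate_succ_apply']
    set y := T (T^[j] x)
    have hy : y ∈ Q := hT hjP
    have hdrift : ‖K y - K x‖ ≤ (j + 1 : ℕ) * κ := by
      calc ‖K y - K x‖ = ‖(K y - K (T^[j] x)) + (K (T^[j] x) - K x)‖ := by
            rw [sub_add_sub_cancel]
        _ ≤ κ + j * κ := norm_add_le_of_le (hK _ hjP) hjK
        _ = (j + 1 : ℕ) * κ := by
            push_cast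
            ring
    refine ⟨hL y hy ?_, hdrift⟩
    calc ‖L y‖ = ‖L x + (K x - L x) + (K y - K x) - (K y - L y)‖ := by
          congr 1
          abel
      _ ≤ ‖L x‖ + η + (j + 1 : ℕ) * κ + η := norm_sub_le_of_le (norm_add_le_of_le
          (norm_add_le_of_le le_rfl (hKL x (hPQ hx))) hdrift) (hKL y hy)
      _ ≤ ‖L x‖ + η + N * κ + η := by gcongr
      _ ≤ b := by linarith

/-- The point `v` lies over the image of `x` in `ℝ^d × 𝕋^d`, in the coordinates scaled by `ρ` about
`I`. -/
def Covers {d : ℕ} (I w : Fin d → ℝ) (ρ : ℝ) (v : ExtPhase d) (x : RPhase d) : Prop :=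
  ∃ q : Fin d → ℤ, v.1 = scaledPoint I w ρ 0 (x.1, x.2 + fun i ↦ (q i : ℝ))

section Covers

variable {d n m N : ℕ} {I w : Fin d → ℝ} {ρ r e δ η b : ℝ} {v : ExtPhase d} {x : RPhase d}
  {F : RPhase d → RPhase d} {G : ExtPhase d → ExtPhase d} {H : (Fin d → ℂ) → ℂ}
  {U : Set (ExtPhase d)}

theorem Covers.fst_fst_eq (hv : Covers I w ρ v x) : v.1.1 = cx d (ρ⁻¹ • (x.1 - I)) := by
  obtain ⟨q, hq⟩ := hv
  rw [hq, scaledPoint]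

theorem Covers.norm_fst_fst (hv : Covers I w ρ v x) (hρ : 0 < ρ) : ‖v.1.1‖ = ‖x.1 - I‖ / ρ := by
  obtain ⟨q, hq⟩ := hv
  rw [hq, norm_scaledPoint_fst hρ]

theorem Covers.ball_subset_extStrip (hv : Covers I w ρ v x) (hρ : 0 < ρ) (he : 0 < e)
    (he1 : 8 * e ≤ 1) (her : 8 * e ≤ r) (hx : ‖x.1 - I‖ ≤ ρ) :
    ball v e ⊆ extStrip d (3 - 4 * e) (r - 4 * e) := by
  obtain ⟨q, hq⟩ := hv
  have hmem : v ∈ extStrip d (3 - 5 * e) (r - 5 * e) := by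
    rw [extStrip, mem_preimage, hq]
    refine scaledPoint_mem_phaseStrip hρ (by linarith) (hx.trans_lt ?_)
    exact lt_mul_of_one_lt_left hρ (by linarith)
  exact ball_subset_closedBall.trans
    (closedBall_subset_extStrip (by linarith) (by linarith) hmem)

-- By resonance, the translation of the angles by `n w` is integral.
theorem Covers.map (hv : Covers I w ρ v x) (hG : IsBlockLift G F n I w ρ H U δ η)
    (hF : ∀ (x : RPhase d) (q : Fin d → ℤ),
      F (x.1, x.2 + fun i ↦ (q i : ℝ)) = ((F x).1, (F x).2 + fun i ↦ (q i : ℝ)))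
    (hw : ∀ i, ∃ z : ℤ, n * w i = z) (hx : ‖x.1 - I‖ ≤ ρ / 2) :
    Covers I w ρ (G v) (F^[n] x) := by
  obtain ⟨q, hq⟩ := hv
  choose z hz using hw
  have hlift : F^[n] (x.1, x.2 + fun i ↦ (q i : ℝ)) =
      ((F^[n] x).1, (F^[n] x).2 + fun i ↦ (q i : ℝ)) :=
    Function.Commute.iterate_left (f := F)
      (g := fun x : RPhase d ↦ (x.1, x.2 + fun i ↦ (q i : ℝ))) (hF · q) n x
  have hGv := hG.map_scaledPoint (x.1, x.2 + fun i ↦ (q i : ℝ)) hx v.2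
  rw [← hq, hlift] at hGv
  refine ⟨q - z, hGv.trans (Prod.ext rfl (funext fun i ↦ ?_))⟩
  simp [scaledPoint, hz, add_sub_assoc]

theorem IsBlockLift.norm_approxEnergy_sub_le
    (hG : IsBlockLift G F n I w ρ H (extStrip d (3 - 4 * e) (r - 4 * e)) δ η) (hρ : 0 < ρ)
    (he : 0 < e) (he1 : 8 * e ≤ 1) (her : 8 * e ≤ r) (hm1 : 1 ≤ m) (hm : 400 * (m * δ) ≤ e)
    (hv : Covers I w ρ v x) (hx : ‖x.1 - I‖ ≤ ρ) :
    ‖approxEnergy G m v - n * H v.1.1‖ ≤ (d + 1) * (16 * δ ^ 2 / e) + η := by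
  have hball := hv.ball_subset_extStrip hρ he he1 her hx
  have hv1 : ‖v.1.1‖ ≤ 1 := by rwa [hv.norm_fst_fst hρ, div_le_one hρ]
  have hinterp := hG.isNearIdContactOn.norm_approxEnergy_sub_le he hball hm1 (by linarith)
  rw [← sub_add_sub_cancel _ (contactForm v (G v - v))]
  refine norm_add_le_of_le (hinterp.trans ?_)
    (hG.norm_contactForm_sub_le v (hball (mem_ball_self he)))
  gcongr
  exact mul_le_of_le_one_right (by positivity) hv1

theorem IsBlockLift.norm_approxEnergy_map_sub_le
    (hG : IsBlockLift G F n I w ρ H (extStrip d (3 - 4 * e) (r - 4 * e)) δ η) (hρ : 0 < ρ)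
    (he : 0 < e) (he1 : 8 * e ≤ 1) (her : 8 * e ≤ r) (hm1 : 1 ≤ m) (hm : 400 * (m * δ) ≤ e)
    (hv : Covers I w ρ v x) (hx : ‖x.1 - I‖ ≤ ρ) (hGv : Covers I w ρ (G v) (F^[n] x))
    (hFx : ‖(F^[n] x).1 - I‖ ≤ ρ) :
    ‖approxEnergy G m (G v) - approxEnergy G m v‖ ≤ (d + 1) * (e * Real.exp (-m)) := by
  have hGv1 : ‖(G v).1.1‖ ≤ 1 := by rwa [hGv.norm_fst_fst hρ, div_le_one hρ]
  refine (hG.isNearIdContactOn.norm_approxEnergy_map_sub_le he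
    (hv.ball_subset_extStrip hρ he he1 her hx) hm1 hm).trans ?_
  gcongr
  exact mul_le_of_le_one_right (by positivity) hGv1

theorem IsBlockLift.norm_iterate_mul_sub_le
    (hG : IsBlockLift G F n I w ρ H (extStrip d (3 - 4 * e) (r - 4 * e)) δ η)
    (hF : ∀ (x : RPhase d) (q : Fin d → ℤ),
      F (x.1, x.2 + fun i ↦ (q i : ℝ)) = ((F x).1, (F x).2 + fun i ↦ (q i : ℝ)))
    (hw : ∀ i, ∃ z : ℤ, n * w i = z) (hρ : 0 < ρ) (he : 0 < e) (he1 : 8 * e ≤ 1)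
    (her : 8 * e ≤ r) (hm1 : 1 ≤ m) (hm : 400 * (m * δ) ≤ e)
    (hH : ∀ u : Fin d → ℝ, ‖u‖ ≤ 1 → n * ‖H (cx d u)‖ ≤ b → ‖u‖ ≤ 1 / 2)
    (hx : ‖x.1 - I‖ ≤ ρ / 2)
    (hb : n * ‖H (cx d (ρ⁻¹ • (x.1 - I)))‖ + 2 * ((d + 1) * (16 * δ ^ 2 / e) + η) +
      N * ((d + 1) * (e * Real.exp (-m))) ≤ b) :
    ∀ j ≤ N, ‖((F^[n])^[j] x).1 - I‖ ≤ ρ / 2 := by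
  set T : ExtPhase d × RPhase d → ExtPhase d × RPhase d := Prod.map G F^[n]
  let P := {p : ExtPhase d × RPhase d | Covers I w ρ p.1 p.2 ∧ ‖p.2.1 - I‖ ≤ ρ / 2}
  let Q := {p : ExtPhase d × RPhase d | Covers I w ρ p.1 p.2 ∧ ‖p.2.1 - I‖ ≤ ρ}
  have hPQ : P ⊆ Q := fun p hp ↦ ⟨hp.1, hp.2.trans (by linarith)⟩
  have hT : MapsTo T P Q := fun p hp ↦ ⟨hp.1.map hG hF hw hp.2,
    (hG.norm_iterate_sub_le p.2 hp.2 n le_rfl).trans (by linarith)⟩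
  have hL : ∀ p ∈ Q, ‖n * H p.1.1.1‖ ≤ b → p ∈ P := by
    rintro ⟨v, y⟩ ⟨hv, hy⟩ hvb
    refine ⟨hv, ?_⟩
    have hnorm : ‖ρ⁻¹ • (y.1 - I)‖ = ‖y.1 - I‖ / ρ := by
      rw [← norm_cx, ← hv.fst_fst_eq, hv.norm_fst_fst hρ]
    have hu := hH (ρ⁻¹ • (y.1 - I)) (by rwa [hnorm, div_le_one hρ])
      (by rwa [norm_mul, Complex.norm_natCast, hv.fst_fst_eq] at hvb)
    rw [hnorm, div_le_iff₀ hρ] at hu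
    exact hu.trans_eq (one_div_mul_eq_div _ _)
  set v : ExtPhase d := (scaledPoint I w ρ 0 x, 0)
  have hv : Covers I w ρ v x := ⟨0, Prod.ext rfl (by ext; simp [v, scaledPoint])⟩
  have hmem := iterate_mem_of_almostInvariant (x := (v, x)) hPQ hT
    (fun p hp ↦ hG.norm_approxEnergy_sub_le hρ he he1 her hm1 hm hp.1 hp.2)
    (fun p hp ↦ hG.norm_approxEnergy_map_sub_le hρ he he1 her hm1 hm hp.1 (hPQ hp).2 (hT hp).1
      (hT hp).2) hL ⟨hv, hx⟩ (by rwa [norm_mul, Complex.norm_natCast, hv.fst_fst_eq])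
  intro j hj
  have hjP := (hmem j hj).2
  rwa [Prod.map_iterate] at hjP

end Covers

/-! ### Exponentially long confinement -/

/-- The constant `C` such that the energy of a block of `n` iterates differs from the approximate
energy by at most `C (n ρ) ^ 2`, up to the contribution of the perturbation. -/
noncomputable def energyErrorConst (d : ℕ) (e Λ M : ℝ) : ℝ :=
  d * stepConst d e Λ M ^ 2 + 18 * Λ * stepConst d e Λ M / e +
    (d + 1) * (16 * stepConst d e Λ M ^ 2 / e)

/-- Smallness of the scale `β = n ρ` of a block of `n` iterates, as needed for confinement. -/
structure IsSmallScale (d : ℕ) (l r e ν Λ M β : ℝ) : Prop where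
  three_mul_le : 3 * β ≤ l
  gradAngle_le : 2 * M / r * β ≤ 1
  genFun_le : 8 * ((9 * Λ + M) * β) ≤ e ^ 2
  displacement_le : 400 * stepConst d e Λ M * β ≤ e
  energyError_le : energyErrorConst d e Λ M * β ≤ ν / 128

theorem exists_pos_forall_isSmallScale (d : ℕ) {l r e ν : ℝ} (Λ M : ℝ) (hl : 0 < l) (he : 0 < e)
    (hν : 0 < ν) : ∃ β₀ > 0, ∀ β, 0 < β → β < β₀ → IsSmallScale d l r e ν Λ M β := by
  have hsmall (c b : ℝ) (hb : 0 < b) : ∀ᶠ β in nhds (0 : ℝ), c * β ≤ b :=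
    ((continuous_const_mul c).tendsto' 0 0 (mul_zero c)).eventually_le_const hb
  obtain ⟨β₀, hβ₀, hball⟩ := Metric.eventually_nhds_iff.mp
    ((hsmall 3 l hl).and ((hsmall (2 * M / r) 1 one_pos).and
      ((hsmall (8 * (9 * Λ + M)) (e ^ 2) (by positivity)).and
        ((hsmall (400 * stepConst d e Λ M) e he).and
          (hsmall (energyErrorConst d e Λ M) (ν / 128) (by positivity))))))
  refine ⟨β₀, hβ₀, fun β hβ hββ₀ ↦ ?_⟩
  obtain ⟨h1, h2, h3, h4, h5⟩ := hball (y := β) (by simpa [abs_of_pos hβ] using hββ₀)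
  exact ⟨h1, h2, by rwa [← mul_assoc], h4, h5⟩

section Confinement

variable {d n : ℕ} {s : CPhase d → ℂ} {K U : Set (Fin d → ℝ)} {σ r M ε ρ l Λ e ν : ℝ}
  {I : Fin d → ℝ} {h : (Fin d → ℝ) → ℝ} {ω : (Fin d → ℝ) → Fin d → ℝ}
  {Hc : (Fin d → ℂ) → ℂ} {F : RPhase d → RPhase d}

theorem IsBlockLift.norm_iterate_sub_lt {G : ExtPhase d → ExtPhase d} {w : Fin d → ℝ}
    {H : (Fin d → ℂ) → ℂ} {V : Set (ExtPhase d)} {δ η : ℝ} {x : RPhase d} {k : ℕ}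
    (hG : IsBlockLift G F n I w ρ H V δ η) (hρ : 0 < ρ) (hn : 0 < n)
    (hx : ‖((F^[n])^[k / n] x).1 - I‖ ≤ ρ / 2) : ‖(F^[k] x).1 - I‖ < ρ := by
  rw [← Nat.mod_add_div k n, Function.iterate_add_apply, Function.iterate_mul]
  exact (hG.norm_iterate_sub_le _ hx _ (Nat.mod_lt k hn).le).trans_lt (by linarith)

theorem norm_le_half_of_mul_norm_scaledHamiltonian_le (hHc : IsLocalComplexification h ω Hc I l Λ)
    (hω : IsFrequencyMapOn h ω U) (hν : 0 < ν) (hconv : IsStronglyMonotoneOn ν ω U)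
    (hU : ball I l ⊆ U) (hn : 0 < n) (hρ : 0 < ρ) (hρl : ρ < l) {u : Fin d → ℝ} (hu : ‖u‖ ≤ 1)
    (hb : n * ‖scaledHamiltonian Hc I (ω I) ρ (cx d u)‖ ≤ ν / 8 * (n * ρ)) : ‖u‖ ≤ 1 / 2 := by
  have hlower := half_mul_norm_sq_le_norm_scaledHamiltonian hHc hω hν hconv hU hρ
    ((mul_le_of_le_one_right hρ.le hu).trans_lt hρl)
  have hsq : ν / 2 * (n * ρ) * ‖u‖ ^ 2 ≤ ν / 2 * (n * ρ) * (1 / 2) ^ 2 := by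
    calc ν / 2 * (n * ρ) * ‖u‖ ^ 2 = n * (ν / 2 * ρ * ‖u‖ ^ 2) := by ring
      _ ≤ n * ‖scaledHamiltonian Hc I (ω I) ρ (cx d u)‖ := by gcongr
      _ ≤ ν / 8 * (n * ρ) := hb
      _ = ν / 2 * (n * ρ) * (1 / 2) ^ 2 := by ring
  exact le_of_sq_le_sq (le_of_mul_le_mul_left hsq (by positivity)) (by norm_num)

theorem mul_norm_scaledHamiltonian_le (hHc : IsLocalComplexification h ω Hc I l Λ) (hΛ : 0 < Λ)
    (hρ : 0 < ρ) (hρl : ρ < l) {u : Fin d → ℝ} (hu : ‖u‖ ≤ min (1 / 2) (ν / (64 * Λ))) :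
    n * ‖scaledHamiltonian Hc I (ω I) ρ (cx d u)‖ ≤ ν / 64 * (n * ρ) := by
  obtain ⟨hu2, huν⟩ := le_min_iff.mp hu
  rw [le_div_iff₀ (by positivity)] at huν
  have hupper := norm_scaledHamiltonian_le hHc hρ (J := cx d u)
    (by rw [norm_cx]; exact (mul_le_of_le_one_right hρ.le (by linarith)).trans_lt hρl)
  rw [norm_cx] at hupper
  calc n * ‖scaledHamiltonian Hc I (ω I) ρ (cx d u)‖ ≤ n * (Λ * ρ * ‖u‖ ^ 2) := by gcongr
    _ ≤ n * (Λ * ρ * ‖u‖) := by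
        gcongr
        exact pow_le_of_le_one (norm_nonneg u) (by linarith) two_ne_zero
    _ = ‖u‖ * (64 * Λ) / 64 * (n * ρ) := by ring
    _ ≤ ν / 64 * (n * ρ) := by gcongr

-- There are `k / n` blocks, each changing the energy by at most `(d + 1) e exp (-m)`.
theorem div_mul_drift_le {κ β : ℝ} {k : ℕ} (hν : 0 ≤ ν) (hβ : 0 ≤ β) (he : 0 < e)
    (hk : k ≤ ν / (64 * (d + 1) * e * Real.exp 1) * β * Real.exp (κ / β)) :
    ((k / n : ℕ) : ℝ) * ((d + 1) * (e * Real.exp (-(⌊κ / β⌋₊ : ℝ)))) ≤ ν / 64 * β := by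
  have hfloor : Real.exp (-(⌊κ / β⌋₊ : ℝ)) ≤ Real.exp 1 * Real.exp (-(κ / β)) := by
    rw [← Real.exp_add]
    gcongr
    linarith [Nat.lt_floor_add_one (κ / β)]
  have hdiv : ((k / n : ℕ) : ℝ) ≤ k := mod_cast Nat.div_le_self k n
  calc ((k / n : ℕ) : ℝ) * ((d + 1) * (e * Real.exp (-(⌊κ / β⌋₊ : ℝ))))
      ≤ ν / (64 * (d + 1) * e * Real.exp 1) * β * Real.exp (κ / β) *
          ((d + 1) * (e * (Real.exp 1 * Real.exp (-(κ / β))))) := by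
        refine mul_le_mul (hdiv.trans hk) ?_ (by positivity) (by positivity)
        gcongr
    _ = ν / 64 * β * (Real.exp (κ / β) * Real.exp (-(κ / β))) := by field_simp
    _ = ν / 64 * β := by rw [← Real.exp_add, add_neg_cancel, Real.exp_zero, mul_one]

theorem two_mul_energyError_le {D c β : ℝ} (hβ : 0 ≤ β)
    (hρ : 0 < ρ) (hMε : 128 * M * ε ≤ ν * ρ ^ 2)
    (herr : (c + (d + 1) * (16 * D ^ 2 / e)) * β ≤ ν / 128) :
    2 * ((d + 1) * (16 * (D * β) ^ 2 / e) + (c * β ^ 2 + β * (ε / ρ ^ 2 * M))) ≤ ν / 32 * β := by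
  have hpert : ε / ρ ^ 2 * M ≤ ν / 128 := by
    rw [div_mul_eq_mul_div, div_le_iff₀ (by positivity)]
    linarith
  calc 2 * ((d + 1) * (16 * (D * β) ^ 2 / e) + (c * β ^ 2 + β * (ε / ρ ^ 2 * M)))
      = 2 * ((c + (d + 1) * (16 * D ^ 2 / e)) * β + ε / ρ ^ 2 * M) * β := by ring
    _ ≤ 2 * (ν / 128 + ν / 128) * β := by gcongr
    _ = ν / 32 * β := by ring

theorem IsSmallScale.exists_isBlockLift (hβ : IsSmallScale d l r e ν Λ M (n * ρ))
    (hHc : IsLocalComplexification h ω Hc I l Λ) (hs : IsPerturbation s K σ r M)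
    (hF : IsNearIntegrableMap F ω s K σ ε) (hI : I ∈ K) (hΛ : 0 ≤ Λ) (hM : 0 ≤ M) (hr : 0 < r)
    (hε : 0 ≤ ε) (hερ : ε ≤ ρ ^ 2) (hn : 0 < n) (hρ : 0 < ρ) (hlσ : l ≤ σ) (he : 0 < e)
    (he1 : 8 * e ≤ 1) (her : 8 * e ≤ r) :
    ∃ G, IsBlockLift G F n I (ω I) ρ (scaledHamiltonian Hc I (ω I) ρ)
      (extStrip d (3 - 4 * e) (r - 4 * e)) (stepConst d e Λ M * (n * ρ))
      ((d * stepConst d e Λ M ^ 2 + 18 * Λ * stepConst d e Λ M / e) * (n * ρ) ^ 2 +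
        n * ρ * (ε / ρ ^ 2 * M)) := by
  have hρβ : ρ ≤ n * ρ := le_mul_of_one_le_left hρ.le (Nat.one_le_cast.mpr hn)
  have hD := stepConst_nonneg (d := d) he.le hΛ hM
  have hgrad : ε * (2 * M / r) ≤ ρ := by
    calc ε * (2 * M / r) ≤ ρ ^ 2 * (2 * M / r) := by gcongr
      _ = 2 * M / r * ρ * ρ := by ring
      _ ≤ 1 * ρ := by
          gcongr
          exact le_trans (by gcongr) hβ.gradAngle_le
      _ = ρ := one_mul ρ
  have hgen : 8 * ((9 * Λ + M) * ρ) ≤ e ^ 2 := le_trans (by gcongr) hβ.genFun_le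
  exact _root_.exists_isBlockLift hHc hs hF hI hΛ hM hr hε hερ hgrad hρ
    (by linarith [hβ.three_mul_le]) (by linarith [hβ.three_mul_le]) he he1 her hgen
    (by nlinarith [hβ.displacement_le, mul_nonneg hD (hρ.le.trans hρβ)])

theorem IsNearIntegrableMap.norm_iterate_sub_lt (hF : IsNearIntegrableMap F ω s K σ ε)
    (hβ : IsSmallScale d l r e ν Λ M (n * ρ)) (hHc : IsLocalComplexification h ω Hc I l Λ)
    (hω : IsFrequencyMapOn h ω U) (hν : 0 < ν) (hconv : IsStronglyMonotoneOn ν ω U)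
    (hU : ball I l ⊆ U) (hs : IsPerturbation s K σ r M) (hI : I ∈ K) (hΛ : 0 < Λ) (hM : 0 ≤ M)
    (hr : 0 < r) (hε : 0 ≤ ε) (hερ : ε ≤ ρ ^ 2) (hMε : 128 * M * ε ≤ ν * ρ ^ 2) (hn : 0 < n)
    (hρ : 0 < ρ) (hlσ : l ≤ σ) (he : 0 < e) (he1 : 8 * e ≤ 1) (her : 8 * e ≤ r)
    (hres : ∀ i, ∃ z : ℤ, n * ω I i = z) {x : RPhase d}
    (hx : ‖x.1 - I‖ ≤ min (1 / 2) (ν / (64 * Λ)) * ρ) {k : ℕ}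
    (hk : k ≤ ν / (64 * (d + 1) * e * Real.exp 1) * (n * ρ) *
      Real.exp (e / (400 * stepConst d e Λ M) / (n * ρ))) :
    ‖(F^[k] x).1 - I‖ < ρ := by
  obtain ⟨G, hG⟩ := hβ.exists_isBlockLift hHc hs hF hI hΛ.le hM hr hε hερ hn hρ hlσ he he1 her
  have hρβ : ρ ≤ n * ρ := le_mul_of_one_le_left hρ.le (Nat.one_le_cast.mpr hn)
  have hβ0 : 0 < n * ρ := hρ.trans_le hρβ
  have hρl : ρ < l := by linarith [hβ.three_mul_le]
  have hD : 0 < stepConst d e Λ M := by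
    rw [stepConst]
    positivity
  have hm1 : 1 ≤ ⌊e / (400 * stepConst d e Λ M) / (n * ρ)⌋₊ := by
    rw [Nat.one_le_floor_iff, one_le_div hβ0, le_div_iff₀ (by positivity)]
    linarith [hβ.displacement_le]
  have hm : 400 * (⌊e / (400 * stepConst d e Λ M) / (n * ρ)⌋₊ *
      (stepConst d e Λ M * (n * ρ))) ≤ e := by
    calc 400 * (⌊e / (400 * stepConst d e Λ M) / (n * ρ)⌋₊ * (stepConst d e Λ M * (n * ρ)))
        ≤ 400 * (e / (400 * stepConst d e Λ M) / (n * ρ) * (stepConst d e Λ M * (n * ρ))) := by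
          gcongr
          exact Nat.floor_le (by positivity)
      _ = e := by field_simp
  have hu : ‖ρ⁻¹ • (x.1 - I)‖ ≤ min (1 / 2) (ν / (64 * Λ)) := by
    rwa [norm_smul, norm_inv, Real.norm_of_nonneg hρ.le, inv_mul_le_iff₀ hρ, mul_comm]
  have hx2 : ‖x.1 - I‖ ≤ ρ / 2 := hx.trans (by nlinarith [min_le_left (1 / 2) (ν / (64 * Λ))])
  have henergy := mul_norm_scaledHamiltonian_le (n := n) hHc hΛ hρ hρl hu
  have herror := two_mul_energyError_le hβ0.le hρ hMε hβ.energyError_le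
  have hdrift := div_mul_drift_le (n := n) hν.le hβ0.le he hk
  refine hG.norm_iterate_sub_lt hρ hn (hG.norm_iterate_mul_sub_le (b := ν / 8 * (n * ρ))
    hF.map_add_intCast hres hρ he he1 her hm1 hm (fun u hu1 hub ↦
      norm_le_half_of_mul_norm_scaledHamiltonian_le hHc hω hν hconv hU hn hρ hρl hu1 hub) hx2 ?_ _
    le_rfl)
  nlinarith

end Confinement

theorem IsPerturbation.mono {d : ℕ} {s : CPhase d → ℂ} {K : Set (Fin d → ℝ)} {σ r M M' : ℝ}
    (hs : IsPerturbation s K σ r M) (hM : M ≤ M') : IsPerturbation s K σ r M' :=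
  ⟨hs.analyticOnNhd, fun z hz ↦ (hs.norm_le z hz).trans hM, hs.im_eq_zero⟩

theorem exists_confinement {d : ℕ} {K U : Set (Fin d → ℝ)} {σ r ν : ℝ} (M : ℝ) (hσ : 0 < σ)
    (hr : 0 < r) (hν : 0 < ν) (hK : IsCompact K) (hU : ∀ I ∈ K, ball I σ ⊆ U)
    {h : (Fin d → ℝ) → ℝ} (hh : AnalyticOnNhd ℝ h U) {ω : (Fin d → ℝ) → Fin d → ℝ}
    (hω : IsFrequencyMapOn h ω U) (hconv : IsStronglyMonotoneOn ν ω U) :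
    ∃ γ₀ r₀ β₀ C κ : ℝ, 1 ≤ γ₀ ∧ 0 < r₀ ∧ r₀ < 1 ∧ 0 < β₀ ∧ 0 < C ∧ 0 < κ ∧
      ∀ {s : CPhase d → ℂ} {F : RPhase d → RPhase d} {ε ρ : ℝ} {n : ℕ} {I : Fin d → ℝ},
        IsPerturbation s K σ r M → IsNearIntegrableMap F ω s K σ ε → I ∈ K →
        (∀ i, ∃ z : ℤ, n * ω I i = z) → 0 ≤ ε → γ₀ * ε ≤ ρ ^ 2 → 0 < n → 0 < ρ → n * ρ < β₀ →
        ∀ x : RPhase d, ‖x.1 - I‖ < r₀ * ρ →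
          ∀ k : ℕ, k ≤ C * (n * ρ) * Real.exp (κ / (n * ρ)) → ‖(F^[k] x).1 - I‖ < ρ := by
  obtain ⟨l, hl, hlσ, Λ, hΛ, hHc⟩ := exists_isLocalComplexification hσ hK hU hh hω
  set M' := max M 0
  have hM' : 0 ≤ M' := le_max_right _ _
  set e := min (1 / 8) (r / 8)
  have he : 0 < e := by positivity
  have he1 : 8 * e ≤ 1 := by linarith [min_le_left (1 / 8) (r / 8)]
  have her : 8 * e ≤ r := by linarith [min_le_right (1 / 8) (r / 8)]
  have hD : 0 < stepConst d e Λ M' := by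
    rw [stepConst]
    positivity
  obtain ⟨β₀, hβ₀, hsmall⟩ := exists_pos_forall_isSmallScale d (r := r) Λ M' hl he hν
  refine ⟨1 + 128 * M' / ν, min (1 / 2) (ν / (64 * Λ)), β₀, ν / (64 * (d + 1) * e * Real.exp 1),
    e / (400 * stepConst d e Λ M'), le_add_of_nonneg_right (by positivity), by positivity,
    (min_le_left _ _).trans_lt one_half_lt_one, hβ₀, by positivity, by positivity, ?_⟩
  intro s F ε ρ n I hs hF hI hres hε hερ hn hρ hnβ x hx k hk
  have hMε : 0 ≤ 128 * M' / ν * ε := by positivity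
  obtain ⟨Hc, hHc⟩ := hHc I hI
  refine hF.norm_iterate_sub_lt (hsmall _ (by positivity) hnβ) hHc hω hν hconv
    ((ball_subset_ball hlσ).trans (hU I hI)) (hs.mono (le_max_left _ _)) hI hΛ hM' hr hε
    (by linarith) ?_ hn hρ hlσ he he1 her hres hx.le hk
  calc 128 * M' * ε = ν * (128 * M' / ν * ε) := by field_simp
    _ ≤ ν * ρ ^ 2 := by
        gcongr
        linarith

section Exponents

theorem exists_pos_forall_mul_rpow_lt {c b α : ℝ} (hc : 0 < c) (hb : 0 < b) (hα : 0 < α) :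
    ∃ ε₁ > 0, ∀ ε, 0 ≤ ε → ε ≤ ε₁ → c * ε ^ α < b := by
  refine ⟨(b / (2 * c)) ^ α⁻¹, by positivity, fun ε hε hε₁ ↦ ?_⟩
  calc c * ε ^ α ≤ c * ((b / (2 * c)) ^ α⁻¹) ^ α := by gcongr
    _ = b / 2 := by
        rw [Real.rpow_inv_rpow (by positivity) hα.ne']
        field_simp
    _ < b := half_lt_self hb

theorem half_mul_exp_half_div_le_mul_exp_div {κ β : ℝ} (hβ : 0 < β) :
    κ / 2 * Real.exp (κ / (2 * β)) ≤ β * Real.exp (κ / β) := by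
  have hexp : κ / (2 * β) ≤ Real.exp (κ / (2 * β)) := by
    linarith [Real.add_one_le_exp (κ / (2 * β))]
  calc κ / 2 * Real.exp (κ / (2 * β)) = β * (κ / (2 * β) * Real.exp (κ / (2 * β))) := by
        field_simp
    _ ≤ β * (Real.exp (κ / (2 * β)) * Real.exp (κ / (2 * β))) := by gcongr
    _ = β * Real.exp (κ / β) := by
        rw [← Real.exp_add]
        congr 2
        field_simp
        ring

theorem mul_sq_le_rpow_sq_of_lt_rpow {d ε x : ℝ} (hd : 0 ≤ d) (hε : 0 < ε) (hx : 0 ≤ x)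
    (hxε : x < ε ^ (-(d / (2 * (d + 1))))) : ε * x ^ 2 ≤ (ε ^ (1 / (2 * (d + 1)))) ^ 2 := by
  calc ε * x ^ 2 ≤ ε ^ (1 : ℝ) * (ε ^ (-(d / (2 * (d + 1))))) ^ 2 := by
        rw [Real.rpow_one]
        gcongr
    _ = (ε ^ (1 / (2 * (d + 1)))) ^ 2 := by
        rw [← Real.rpow_mul_natCast hε.le, ← Real.rpow_mul_natCast hε.le, ← Real.rpow_add hε]
        congr 1
        push_cast
        field_simp
        ring

end Exponents

theorem long_term_stability_near_resonant_torus_general {d : ℕ} {K U : Set (Fin d → ℝ)}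
    {σ r ν εbar M : ℝ} (hσ : 0 < σ) (hr : 0 < r) (hν : 0 < ν) (hεbar : 0 < εbar)
    (hK : IsCompact K) (hU : ∀ I ∈ K, ball I σ ⊆ U) {h : (Fin d → ℝ) → ℝ}
    (hh : AnalyticOnNhd ℝ h U) {ω : (Fin d → ℝ) → Fin d → ℝ} (hω : IsFrequencyMapOn h ω U)
    (hconv : IsStronglyMonotoneOn ν ω U) {s : ℝ → CPhase d → ℂ}
    (hs : ∀ ε ∈ Icc 0 εbar, IsPerturbation (s ε) K σ r M) {F : ℝ → RPhase d → RPhase d}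
    (hF : ∀ ε ∈ Icc 0 εbar, IsNearIntegrableMap (F ε) ω (s ε) K σ ε) :
    ∃ γ₀ r₀ : ℝ, 0 < γ₀ ∧ 0 < r₀ ∧ r₀ < 1 ∧
      ∀ γ : ℝ, γ₀ ≤ γ →
        ∃ ε₀ c₂ c₃ : ℝ, 0 < ε₀ ∧ ε₀ ≤ εbar ∧ 0 < c₂ ∧ 0 < c₃ ∧
          ∀ ε : ℝ, 0 < ε → ε ≤ ε₀ →
            ∀ n : ℕ, 0 < n → (n : ℝ) < ε ^ (-((d : ℝ) / (2 * ((d : ℝ) + 1)))) →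
              ∀ Istar : Fin d → ℝ, Istar ∈ K →
                (∀ i, ∃ z : ℤ, (n : ℝ) * ω Istar i = (z : ℝ)) →
                ∀ x₀ : RPhase d,
                  ‖x₀.1 - Istar‖ < r₀ * (γ * ε ^ (1 / (2 * ((d : ℝ) + 1))) / n) →
                  ∀ k : ℕ,
                    (k : ℝ) ≤ c₂ * Real.exp (c₃ * ε ^ (-(1 / (2 * ((d : ℝ) + 1))))) →
                    ‖((F ε)^[k] x₀).1 - Istar‖ <
                      γ * ε ^ (1 / (2 * ((d : ℝ) + 1))) / n := by
  obtain ⟨γ₀, r₀, β₀, C, κ, hγ₀, hr₀, hr₀1, hβ₀, hC, hκ, hconf⟩ :=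
    exists_confinement M hσ hr hν hK hU hh hω hconv
  refine ⟨γ₀, r₀, one_pos.trans_le hγ₀, hr₀, hr₀1, fun γ hγ ↦ ?_⟩
  have hγ0 : 0 < γ := one_pos.trans_le (hγ₀.trans hγ)
  set α : ℝ := 1 / (2 * (d + 1))
  obtain ⟨ε₁, hε₁, hsmall⟩ := exists_pos_forall_mul_rpow_lt (α := α) hγ0 hβ₀ (by positivity)
  refine ⟨min εbar ε₁, C * (κ / 2), κ / (2 * γ), by positivity, min_le_left _ _, by positivity,
    by positivity, fun ε hε hεε₀ n hn hnε I hI hres x hx k hk ↦ ?_⟩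
  have hεmem : ε ∈ Icc 0 εbar := ⟨hε.le, hεε₀.trans (min_le_left _ _)⟩
  have hscale : n * (γ * ε ^ α / n) = γ * ε ^ α := by field_simp
  have hγε : γ₀ * ε ≤ (γ * ε ^ α / n) ^ 2 := by
    rw [div_pow, le_div_iff₀ (by positivity), mul_pow, mul_assoc]
    exact mul_le_mul (by nlinarith)
      (mul_sq_le_rpow_sq_of_lt_rpow d.cast_nonneg hε n.cast_nonneg hnε) (by positivity)
      (by positivity)
  refine hconf (hs ε hεmem) (hF ε hεmem) hI hres hε.le hγε hn (by positivity)
    (hscale.trans_lt (hsmall ε hε.le (hεε₀.trans (min_le_right _ _)))) x hx k (hk.trans ?_)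
  have htime := half_mul_exp_half_div_le_mul_exp_div (κ := κ) (β := γ * ε ^ α) (by positivity)
  rw [hscale, Real.rpow_neg hε.le, ← div_eq_mul_inv, div_div, mul_assoc 2 γ, mul_assoc, mul_assoc]
  gcongr

end

/-- **Long term stability of actions near a fully resonant torus.**
In the Nekhoroshev setting (see the paper), there are constants `γ₀ > 0` and
`r₀ ∈ (0,1)` such that for every `γ ≥ γ₀` there are positive `ε₀, c₂, c₃` with:
if `0 < ε ≤ ε₀`, `n < ε^{−d/(2(d+1))}` is a natural number, and `I* ∈ B_R` is fully
resonant (`n ω(I*) ∈ ℤ^d`), then every trajectory with `|I₀ − I*| < r₀ ρ_n` satisfies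
`|I_k − I*| < ρ_n` for all `0 ≤ k ≤ c₂ exp(c₃ ε^{−1/(2(d+1))})`, where
`ρ_n = γ n^{−1} ε^{1/(2(d+1))}`. -/
theorem long_term_stability_near_resonant_torus (d : ℕ) (hd : 1 ≤ d)
    (R σ r ν εbar Ms : ℝ)
    (hR : 0 < R) (hσ : 0 < σ) (hr : 0 < r) (hν : 0 < ν) (hεbar : 0 < εbar)
    (c₀ : Fin d → ℝ) (BR : Set (Fin d → ℝ)) (hBR : BR = Metric.closedBall c₀ R)
    (Uσ : Set (Fin d → ℝ)) (hUσ : Uσ = {I | ∃ y ∈ BR, dist I y ≤ σ})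
    (DF : Set (CPhase d))
    (hDF : DF = {z : CPhase d |
      (∃ y ∈ BR, dist z.1 (cx d y) ≤ σ) ∧ ∀ i, |(z.2 i).im| ≤ r})
    (h₀ : (Fin d → ℝ) → ℝ) (hh₀ : AnalyticOnNhd ℝ h₀ Uσ)
    (ω : (Fin d → ℝ) → Fin d → ℝ)
    (hω : ∀ I ∈ Uσ, HasFDerivAt h₀
      (∑ i, ω I i • (ContinuousLinearMap.proj i : (Fin d → ℝ) →L[ℝ] ℝ)) I)
    (hconvex : ∀ I ∈ Uσ, ∀ v : Fin d → ℝ,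
      ν * ∑ i, v i ^ 2 ≤ ∑ i, fderiv ℝ ω I v i * v i)
    (s : ℝ → CPhase d → ℂ)
    (hsa : ∀ ε ∈ Set.Icc (0 : ℝ) εbar, AnalyticOnNhd ℂ (s ε) DF)
    (hsreal : ∀ ε ∈ Set.Icc (0 : ℝ) εbar, ∀ x : RPhase d,
      (cx d x.1, cx d x.2) ∈ DF → (s ε (cx d x.1, cx d x.2)).im = 0)
    (hsper : ∀ ε ∈ Set.Icc (0 : ℝ) εbar, ∀ z ∈ DF, ∀ e : Fin d → ℤ,
      s ε (z.1, z.2 + fun i => ((e i : ℝ) : ℂ)) = s ε z)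
    (hsbound : ∀ ε ∈ Set.Icc (0 : ℝ) εbar, ∀ z ∈ DF, ‖s ε z‖ ≤ Ms)
    (F : ℝ → RPhase d → RPhase d)
    (hF : ∀ ε ∈ Set.Icc (0 : ℝ) εbar, ∀ x : RPhase d,
      (∃ y ∈ BR, dist x.1 y ≤ σ / 2) →
      (∃ y ∈ BR, dist (F ε x).1 y ≤ σ) ∧
      (∀ i, (F ε x).1 i = x.1 i -
        ε * (fderiv ℂ (s ε) (cx d (F ε x).1, cx d x.2) (0, Pi.single i 1)).re) ∧
      (∀ i, (F ε x).2 i = x.2 i + ω (F ε x).1 i +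
        ε * (fderiv ℂ (s ε) (cx d (F ε x).1, cx d x.2) (Pi.single i 1, 0)).re))
    (hlift : ∀ ε ∈ Set.Icc (0 : ℝ) εbar, ∀ x : RPhase d, ∀ e : Fin d → ℤ,
      F ε (x.1, x.2 + fun i => (e i : ℝ)) = ((F ε x).1, (F ε x).2 + fun i => (e i : ℝ))) :
    ∃ γ₀ r₀ : ℝ, 0 < γ₀ ∧ 0 < r₀ ∧ r₀ < 1 ∧
      ∀ γ : ℝ, γ₀ ≤ γ →
        ∃ ε₀ c₂ c₃ : ℝ, 0 < ε₀ ∧ ε₀ ≤ εbar ∧ 0 < c₂ ∧ 0 < c₃ ∧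
          ∀ ε : ℝ, 0 < ε → ε ≤ ε₀ →
            ∀ n : ℕ, 0 < n → (n : ℝ) < ε ^ (-((d : ℝ) / (2 * ((d : ℝ) + 1)))) →
              ∀ Istar : Fin d → ℝ, Istar ∈ BR →
                (∀ i, ∃ z : ℤ, (n : ℝ) * ω Istar i = (z : ℝ)) →
                ∀ x₀ : RPhase d,
                  ‖x₀.1 - Istar‖ < r₀ * (γ * ε ^ (1 / (2 * ((d : ℝ) + 1))) / n) →
                  ∀ k : ℕ,
                    (k : ℝ) ≤ c₂ * Real.exp (c₃ * ε ^ (-(1 / (2 * ((d : ℝ) + 1))))) →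
                    ‖((F ε)^[k] x₀).1 - Istar‖ <
                      γ * ε ^ (1 / (2 * ((d : ℝ) + 1))) / n := by
  subst hBR hUσ hDF
  exact long_term_stability_near_resonant_torus_general hσ hr hν hεbar
    (isCompact_closedBall c₀ R) (U := {I | ∃ y ∈ Metric.closedBall c₀ R, dist I y ≤ σ})
    (fun I hI x hx ↦ ⟨I, hI, (Metric.mem_ball.mp hx).le⟩) hh₀ hω hconvex
    (fun ε hε ↦ ⟨hsa ε hε, hsbound ε hε, hsreal ε hε⟩)
    (fun ε hε ↦ ⟨fun x hx ↦ (hF ε hε x hx).1,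
      fun x hx ↦ ⟨(hF ε hε x hx).2.1, (hF ε hε x hx).2.2⟩, hlift ε hε⟩)
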